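/- Let n be a natural number, let M be a connected Hausdorff topological space locally homeomorphic to the euclidean space ℝⁿ (a topological n-manifold), and let G be a countable group acting by homeomorphisms on M such that the orbit space M/G is Hausdorff. If g ∈ G is an element whose fixed point set {x ∈ M : g•x = x} has nonempty interior, then g•x = x for every x ∈ M. -/

import Mathlib

/-!
The heart of the matter is Newman's theorem: a map of prime period `p` on a connected open subset of
a manifold that is the identity on a nonempty open set is the identity. Locally, let `h` be the
identity on a ball around `z` and move a point `w` of a larger concentric ball. Take a map which is
`y - z` near `z`, tapers off to `0` and takes the value `v` at `w`, average it over the orbits of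
`h` and call the result `f`. Then `f - v` has total degree `0`, since `v` can be moved off to
infinity. Near `z` it has degree `1`. Away from `z` all its zeros lie on free orbits, because at a
fixed point `f` is still the original tapering map, injective where nonzero; every zero is thus
counted `p` times with the same sign, and `p` divides `1`. The degree of `f` is the integral of the
Jacobian determinant of `σ ∘ f`, where `σ` is a smooth step function in every coordinate; Sard's
theorem makes it an integer.

For the group action, the Hausdorff orbit space and Baire's theorem make orbits discrete, so a point
fixed by `g` has arbitrarily small connected neighbourhoods `W` with `g W ⊆ W`, all of whose points
are periodic. By Baire again some power `h` of `g` fixes every point of such a `W` at which `h` is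
not locally of finite order. The map equal to `h` on the interior of the fixed point set of `h ^ j`
and to the identity elsewhere in `W` is then continuous and periodic, so by Newman's theorem `h` has
finite order on `W`. Hence `g` is locally of finite order at each of its fixed points, and a last
application of Newman's theorem shows that the interior of its fixed point set is closed.
-/

section

open Set Filter Topology MeasureTheory Metric

section JacobianIntegral

variable {E : Type*} [NormedAddCommGroup E] [NormedSpace ℝ E]

theorem bijective_smul_add_of_lipschitzWith [CompleteSpace E] {A : E → E} {C : NNReal}
    (hA : LipschitzWith C A) {s : ℝ} (hs : C < s) : Function.Bijective fun x ↦ s • x + A x := by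
  have hs0 : 0 < s := C.coe_nonneg.trans_lt hs
  set L : E ≃L[ℝ] E := ContinuousLinearEquiv.smulLeft (Units.mk0 s hs0.ne') with hL
  have hf : ApproximatesLinearOn (fun x ↦ s • x + A x) (L : E →L[ℝ] E) univ C := by
    rw [ApproximatesLinearOn.approximatesLinearOn_iff_lipschitzOnWith, lipschitzOnWith_univ]
    convert hA using 1
    ext x
    simp [hL, Units.smul_def]
  have hc : Subsingleton E ∨ C < ‖(L.symm : E →L[ℝ] E)‖₊⁻¹ := by
    refine (subsingleton_or_nontrivial E).imp_right fun _ ↦ ?_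
    have : NontrivialTopology E := EMetric.nontrivial_iff_nontrivialTopology.1 ‹_›
    have hsymm : (L.symm : E →L[ℝ] E) = s⁻¹ • ContinuousLinearMap.id ℝ E := by
      ext x
      simp [hL, ContinuousLinearEquiv.symm_apply_eq, Units.smul_def, hs0.ne']
    rw [← NNReal.coe_lt_coe, NNReal.coe_inv, coe_nnnorm, hsymm, norm_smul,
      ContinuousLinearMap.norm_id, mul_one, norm_inv, inv_inv, Real.norm_of_nonneg hs0.le]
    exact hs
  exact ⟨injOn_univ.1 (hf.injOn hc), hf.surjective hc⟩

variable [FiniteDimensional ℝ E]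

theorem exists_det_eq_sum_det_smul_id_add {v : ℕ → ℝ} (hv : Function.Injective v) :
    ∃ c : ℕ → ℝ, ∀ T : E →L[ℝ] E, T.det =
      ∑ k ∈ Finset.range (Module.finrank ℝ E + 1),
        c k * (v k • ContinuousLinearMap.id ℝ E + T).det := by
  refine ⟨fun k ↦ (Lagrange.basis (Finset.range (Module.finrank ℝ E + 1)) v k).eval 0,
    fun T ↦ ?_⟩
  set P := LinearMap.charpoly (-T : E →ₗ[ℝ] E) with hP
  have hdeg : P.degree < (Finset.range (Module.finrank ℝ E + 1)).card := by
    rw [Finset.card_range, Polynomial.degree_eq_natDegree (LinearMap.charpoly_monic _).ne_zero,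
      LinearMap.charpoly_natDegree]
    exact_mod_cast Nat.lt_succ_self _
  have heval (s : ℝ) : P.eval s = (s • ContinuousLinearMap.id ℝ E + T).det := by
    rw [hP, LinearMap.eval_charpoly, ContinuousLinearMap.det]
    congr 1
    ext x
    simp
  have hzero := congrArg (Polynomial.eval 0) (Lagrange.eq_interpolate hv.injOn hdeg)
  simpa [Lagrange.interpolate_apply, Polynomial.eval_finsetSum, heval, mul_comm] using hzero

theorem det_smul_id_add_pos {T : E →L[ℝ] E} {s : ℝ} (hs : ‖T‖ < s) :
    0 < (s • ContinuousLinearMap.id ℝ E + T).det := by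
  have hs0 : 0 < s := (norm_nonneg T).trans_lt hs
  let g (t : ℝ) : ℝ := (s • ContinuousLinearMap.id ℝ E + t • T).det
  have hg : Continuous g := ContinuousLinearMap.continuous_det.comp (by fun_prop)
  have hne : ∀ t ∈ Icc (0 : ℝ) 1, g t ≠ 0 := by
    intro t ht hzero
    have hnorm : ‖t • T‖ < s := by
      rw [norm_smul, Real.norm_of_nonneg ht.1]
      exact (mul_le_of_le_one_left (norm_nonneg T) ht.2).trans_lt hs
    have hinj := (bijective_smul_add_of_lipschitzWith (t • T).lipschitz hnorm).injective
    refine (LinearMap.bot_lt_ker_of_det_eq_zero hzero).ne' (LinearMap.ker_eq_bot.2 ?_)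
    exact hinj
  have hpos : 0 < g 0 := by
    simp only [g, zero_smul, add_zero, ContinuousLinearMap.det,
      ContinuousLinearMap.toLinearMap_smul,
      ContinuousLinearMap.coe_id, LinearMap.det_smul, LinearMap.det_id, mul_one]
    exact pow_pos hs0 _
  by_contra hneg
  have hone : g 1 ≤ 0 := by simpa [g] using not_lt.1 hneg
  obtain ⟨t, ht, htzero⟩ := intermediate_value_Icc' zero_le_one hg.continuousOn ⟨hone, hpos.le⟩
  exact hne t ht htzero

variable [MeasurableSpace E] [BorelSpace E] {μ : Measure E} [μ.IsAddHaarMeasure]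

theorem setIntegral_det_smul_id_add_fderiv {A : E → E} (hA : ContDiff ℝ 1 A) {C : NNReal}
    (hlip : LipschitzWith C A) {s : ℝ} (hs : C < s) {B : Set E} (hB : MeasurableSet B) :
    ∫ x in B, (s • ContinuousLinearMap.id ℝ E + fderiv ℝ A x).det ∂μ =
      ∫ _ in (fun x ↦ s • x + A x) '' B, (1 : ℝ) ∂μ := by
  have hderiv : ∀ x ∈ B, HasFDerivWithinAt (fun x ↦ s • x + A x)
      (s • ContinuousLinearMap.id ℝ E + fderiv ℝ A x) B x := fun x _ ↦
    (((hasFDerivAt_id x).const_smul s).add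
      (hA.differentiable one_ne_zero x).hasFDerivAt).hasFDerivWithinAt
  rw [integral_image_eq_integral_abs_det_fderiv_smul μ hB hderiv
    (bijective_smul_add_of_lipschitzWith hlip hs).injective.injOn]
  refine setIntegral_congr_fun hB fun x _ ↦ ?_
  have hpos := det_smul_id_add_pos (T := fderiv ℝ A x)
    ((norm_fderiv_le_of_lipschitz ℝ hlip).trans_lt hs)
  simp [abs_of_pos hpos]

-- Both maps are bijections of `E` agreeing off a ball, so they map the ball to the same set.
theorem integral_det_smul_id_add_fderiv_sub_eq_zero {A u : E → E} (hA : ContDiff ℝ 1 A)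
    (hu : ContDiff ℝ 1 u) (hsupp : HasCompactSupport u) {C : NNReal} (hlip : LipschitzWith C A)
    (hlip' : LipschitzWith C (A + u)) {s : ℝ} (hs : C < s) :
    ∫ x, ((s • ContinuousLinearMap.id ℝ E + (fderiv ℝ A x + fderiv ℝ u x)).det -
      (s • ContinuousLinearMap.id ℝ E + fderiv ℝ A x).det) ∂μ = 0 := by
  obtain ⟨R, hR⟩ := hsupp.isBounded.subset_closedBall 0
  set B := closedBall (0 : E) R
  have := hA.continuous_fderiv one_ne_zero
  have := hu.continuous_fderiv one_ne_zero
  have himage : (fun x ↦ s • x + (A + u) x) '' B = (fun x ↦ s • x + A x) '' B := by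
    rw [← compl_inj_iff, ← image_compl_eq (bijective_smul_add_of_lipschitzWith hlip hs),
      ← image_compl_eq (bijective_smul_add_of_lipschitzWith hlip' hs)]
    refine image_congr fun x hx ↦ ?_
    simp [image_eq_zero_of_notMem_tsupport fun h ↦ hx (hR h)]
  have hvol : ∫ x in B, (s • ContinuousLinearMap.id ℝ E + fderiv ℝ (A + u) x).det ∂μ =
      ∫ x in B, (s • ContinuousLinearMap.id ℝ E + fderiv ℝ A x).det ∂μ := by
    rw [setIntegral_det_smul_id_add_fderiv (A := A + u) (hA.add hu) hlip' hs
        measurableSet_closedBall,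
      setIntegral_det_smul_id_add_fderiv hA hlip hs measurableSet_closedBall, himage]
  simp_rw [fun x ↦ fderiv_add (hA.differentiable one_ne_zero x)
    (hu.differentiable one_ne_zero x)] at hvol
  rw [← setIntegral_eq_integral_of_forall_compl_eq_zero (s := B), integral_sub, hvol, sub_self]
  · exact (ContinuousLinearMap.continuous_det.comp_continuousOn (by fun_prop)).integrableOn_compact
      (isCompact_closedBall _ _)
  · exact (ContinuousLinearMap.continuous_det.comp_continuousOn (by fun_prop)).integrableOn_compact
      (isCompact_closedBall _ _)
  · intro x hx
    have hux : fderiv ℝ u x = 0 := by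
      by_contra h
      exact hx (hR (support_fderiv_subset ℝ h))
    rw [hux, add_zero, sub_self]

theorem integral_det_fderiv_add_sub_eq_zero_of_hasCompactSupport {A u : E → E}
    (hA : ContDiff ℝ 1 A) (hAsupp : HasCompactSupport A) (hu : ContDiff ℝ 1 u)
    (husupp : HasCompactSupport u) :
    ∫ x, ((fderiv ℝ A x + fderiv ℝ u x).det - (fderiv ℝ A x).det) ∂μ = 0 := by
  obtain ⟨C₁, hC₁⟩ := ContDiff.lipschitzWith_of_hasCompactSupport hAsupp hA one_ne_zero
  obtain ⟨C₂, hC₂⟩ := ContDiff.lipschitzWith_of_hasCompactSupport (hAsupp.add husupp)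
    (hA.add hu) one_ne_zero
  set C := max C₁ C₂
  let v (k : ℕ) : ℝ := C + 1 + k
  have hv : Function.Injective v := fun a b hab ↦ by simpa [v] using hab
  have hCv (k : ℕ) : C < v k := by
    have : (0 : ℝ) ≤ k := k.cast_nonneg
    simp only [v]
    linarith
  obtain ⟨c, hc⟩ := exists_det_eq_sum_det_smul_id_add (E := E) hv
  have := hA.continuous_fderiv one_ne_zero
  have := hu.continuous_fderiv one_ne_zero
  have hexpand (x : E) : (fderiv ℝ A x + fderiv ℝ u x).det - (fderiv ℝ A x).det =
      ∑ k ∈ Finset.range (Module.finrank ℝ E + 1),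
        c k * ((v k • ContinuousLinearMap.id ℝ E + (fderiv ℝ A x + fderiv ℝ u x)).det -
          (v k • ContinuousLinearMap.id ℝ E + fderiv ℝ A x).det) := by
    rw [hc (fderiv ℝ A x + fderiv ℝ u x), hc (fderiv ℝ A x), ← Finset.sum_sub_distrib]
    simp only [mul_sub]
  simp_rw [hexpand]
  rw [integral_finsetSum]
  · refine Finset.sum_eq_zero fun k _ ↦ ?_
    rw [integral_const_mul, integral_det_smul_id_add_fderiv_sub_eq_zero hA hu husupp
      (hC₁.weaken (le_max_left _ _)) (hC₂.weaken (le_max_right _ _)) (hCv k), mul_zero]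
  · intro k _
    refine Continuous.integrable_of_hasCompactSupport (continuous_const.mul
      ((ContinuousLinearMap.continuous_det.comp (by fun_prop)).sub
        (ContinuousLinearMap.continuous_det.comp (by fun_prop)))) ?_
    refine (husupp.fderiv ℝ).mono fun x hx h ↦ hx ?_
    simp [h]

theorem integral_det_fderiv_add_sub_eq_zero {A u : E → E} (hA : ContDiff ℝ 1 A)
    (hu : ContDiff ℝ 1 u) (hsupp : HasCompactSupport u) :
    ∫ x, ((fderiv ℝ A x + fderiv ℝ u x).det - (fderiv ℝ A x).det) ∂μ = 0 := by
  obtain ⟨R, hR⟩ := hsupp.isBounded.subset_closedBall 0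
  let χ : ContDiffBump (0 : E) := ⟨max R 0 + 1, max R 0 + 2, by positivity, by linarith⟩
  rw [← integral_det_fderiv_add_sub_eq_zero_of_hasCompactSupport (μ := μ) (χ.contDiff.smul hA)
    χ.hasCompactSupport.smul_right hu hsupp]
  congr 1 with x
  by_cases hx : x ∈ tsupport u
  · have hx' : x ∈ ball (0 : E) (max R 0 + 1) :=
      mem_ball.2 ((mem_closedBall.1 (hR hx)).trans_lt (by linarith [le_max_left R 0]))
    have heq : (fun x ↦ χ x • A x) =ᶠ[𝓝 x] A := by
      filter_upwards [isOpen_ball.mem_nhds hx'] with y hy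
      rw [χ.one_of_mem_closedBall (ball_subset_closedBall hy), one_smul]
    rw [← heq.fderiv_eq]
    rfl
  · have : fderiv ℝ u x = 0 := by
      by_contra h
      exact hx (support_fderiv_subset ℝ h)
    simp [this]

end JacobianIntegral

section DegreeIntegral

/-- A smooth step function on `ℝ`, equal to `0` on `(-∞, -δ]` and to `1` on `[δ, ∞)`. -/
noncomputable def smoothStep (δ t : ℝ) : ℝ := Real.smoothTransition ((t / δ + 1) / 2)

theorem smoothStep_eq_one {δ t : ℝ} (hδ : 0 < δ) (ht : δ ≤ t) : smoothStep δ t = 1 := by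
  have : 1 ≤ t / δ := (one_le_div hδ).2 ht
  exact Real.smoothTransition.one_of_one_le (by linarith)

theorem smoothStep_eq_zero {δ t : ℝ} (hδ : 0 < δ) (ht : t ≤ -δ) : smoothStep δ t = 0 := by
  have : t / δ ≤ -1 := by rwa [div_le_iff₀ hδ, neg_one_mul]
  exact Real.smoothTransition.zero_of_nonpos (by linarith)

theorem contDiff_smoothStep (δ : ℝ) : ContDiff ℝ 1 (smoothStep δ) :=
  Real.smoothTransition.contDiff.comp (by fun_prop)

theorem integral_deriv_smoothStep {δ : ℝ} (hδ : 0 < δ) : ∫ t, deriv (smoothStep δ) t = 1 := by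
  have hzero : smoothStep δ =ᶠ[atBot] fun _ ↦ 0 := by
    filter_upwards [eventually_le_atBot (-δ)] with y hy using smoothStep_eq_zero hδ hy
  have hone : smoothStep δ =ᶠ[atTop] fun _ ↦ 1 := by
    filter_upwards [eventually_ge_atTop δ] with y hy using smoothStep_eq_one hδ hy
  have hsupp : HasCompactSupport (deriv (smoothStep δ)) := by
    refine HasCompactSupport.intro (K := Icc (-δ) δ) isCompact_Icc fun x hx ↦ ?_
    rcases not_and_or.1 hx with hx | hx
    · have : smoothStep δ =ᶠ[𝓝 x] fun _ ↦ 0 := by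
        filter_upwards [gt_mem_nhds (not_le.1 hx)] with y hy using smoothStep_eq_zero hδ hy.le
      rw [this.deriv_eq, deriv_const]
    · have : smoothStep δ =ᶠ[𝓝 x] fun _ ↦ 1 := by
        filter_upwards [lt_mem_nhds (not_le.1 hx)] with y hy using smoothStep_eq_one hδ hy.le
      rw [this.deriv_eq, deriv_const]
  rw [integral_of_hasDerivAt_of_tendsto
    (fun x ↦ ((contDiff_smoothStep δ).differentiable one_ne_zero x).hasDerivAt)
    (((contDiff_smoothStep δ).continuous_deriv le_rfl).integrable_of_hasCompactSupport hsupp)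
    (tendsto_const_nhds.congr' hzero.symm) (tendsto_const_nhds.congr' hone.symm), sub_zero]

variable {ι : Type*}

/-- The map of `ι → ℝ` applying the smooth step function `smoothStep δ` to every coordinate. Its
Jacobian determinant is a bump function of integral `1` supported in the closed ball of radius `δ`
around the origin. -/
noncomputable def stepMap (δ : ℝ) (y : ι → ℝ) : ι → ℝ := fun i ↦ smoothStep δ (y i)

theorem det_fderiv_eq_zero_of_eventually_apply_eq [Finite ι] {a : (ι → ℝ) → ι → ℝ} {x : ι → ℝ}
    (ha : DifferentiableAt ℝ a x) {i : ι} {c : ℝ} (h : ∀ᶠ y in 𝓝 x, a y i = c) :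
    (fderiv ℝ a x).det = 0 := by
  classical
  cases nonempty_fintype ι
  have hproj : (ContinuousLinearMap.proj i).comp (fderiv ℝ a x) = 0 :=
    (hasFDerivAt_pi'.1 ha.hasFDerivAt i).unique
      ((hasFDerivAt_const c x).congr_of_eventuallyEq h)
  rw [ContinuousLinearMap.det, ← LinearMap.det_toMatrix']
  refine Matrix.det_eq_zero_of_row_eq_zero i fun j ↦ ?_
  rw [LinearMap.toMatrix'_apply]
  exact DFunLike.congr_fun hproj (Pi.single j 1)

variable [Fintype ι]

theorem contDiff_stepMap (δ : ℝ) : ContDiff ℝ 1 (stepMap δ : (ι → ℝ) → ι → ℝ) :=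
  contDiff_pi.2 fun i ↦ (contDiff_smoothStep δ).comp (contDiff_apply ℝ ℝ i)

theorem det_fderiv_stepMap (δ : ℝ) (y : ι → ℝ) :
    (fderiv ℝ (stepMap δ) y).det = ∏ i, deriv (smoothStep δ) (y i) := by
  classical
  have hderiv : HasFDerivAt (stepMap δ) (ContinuousLinearMap.pi fun i ↦
      deriv (smoothStep δ) (y i) • ContinuousLinearMap.proj (R := ℝ) (φ := fun _ : ι ↦ ℝ) i) y :=
    hasFDerivAt_pi.2 fun i ↦ ((contDiff_smoothStep δ).differentiable one_ne_zero
      (y i)).hasDerivAt.comp_hasFDerivAt y (hasFDerivAt_apply i y)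
  rw [hderiv.fderiv, ContinuousLinearMap.det, ← LinearMap.det_toMatrix', ← Matrix.det_diagonal]
  congr 1
  ext i j
  simp [LinearMap.toMatrix'_apply, Matrix.diagonal_apply, Pi.single_apply]

theorem integral_det_fderiv_stepMap {δ : ℝ} (hδ : 0 < δ) :
    ∫ y : ι → ℝ, (fderiv ℝ (stepMap δ) y).det = 1 := by
  simp_rw [det_fderiv_stepMap]
  rw [integral_fintype_prod_volume_eq_prod fun _ ↦ deriv (smoothStep δ)]
  simp [integral_deriv_smoothStep hδ]

/-- The integral over `V` of the Jacobian determinant of `stepMap δ ∘ q`. For small `δ` it counts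
the zeros of `q` in `V` with sign. -/
noncomputable def degreeIntegral (δ : ℝ) (q : (ι → ℝ) → ι → ℝ) (V : Set (ι → ℝ)) : ℝ :=
  ∫ x in V, (fderiv ℝ (stepMap δ ∘ q) x).det

theorem integrableOn_det_fderiv {a : (ι → ℝ) → ι → ℝ} (ha : ContDiff ℝ 1 a) {V : Set (ι → ℝ)}
    (hV : Bornology.IsBounded V) : IntegrableOn (fun x ↦ (fderiv ℝ a x).det) V :=
  ((ContinuousLinearMap.continuous_det.comp
    (ha.continuous_fderiv one_ne_zero)).continuousOn.integrableOn_compact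
      hV.isCompact_closure).mono_set subset_closure

theorem exists_contDiff_tsupport_subset_eventually_eq_one {E : Type*} [NormedAddCommGroup E]
    [NormedSpace ℝ E] [FiniteDimensional ℝ E] {K V : Set E} (hK : IsCompact K) (hV : IsOpen V)
    (hKV : K ⊆ V) :
    ∃ χ : E → ℝ, ContDiff ℝ 1 χ ∧ HasCompactSupport χ ∧ tsupport χ ⊆ V ∧
      (∀ x ∈ K, ∀ᶠ y in 𝓝 x, χ y = 1) ∧ ∀ x, χ x ∈ Icc (0 : ℝ) 1 := by
  obtain ⟨L, hL, hKL, hLV⟩ := exists_compact_between hK hV hKV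
  obtain ⟨f, hone, hzero, hrange⟩ := exists_contMDiffMap_one_nhds_of_subset_interior
    (modelWithCornersSelf ℝ E) (n := 1) hK.isClosed hKL
  have hsupp : tsupport f ⊆ L :=
    closure_minimal (fun x hx ↦ by_contra fun h ↦ hx (hzero x h)) hL.isClosed
  exact ⟨f, f.contMDiff.contDiff, hL.of_isClosed_subset (isClosed_tsupport _) hsupp,
    hsupp.trans hLV, fun x hx ↦ eventually_nhdsSet_iff_forall.1 hone x hx, hrange⟩

theorem setIntegral_det_fderiv_congr {a b : (ι → ℝ) → ι → ℝ} (ha : ContDiff ℝ 1 a)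
    (hb : ContDiff ℝ 1 b) {K V : Set (ι → ℝ)} (hK : IsCompact K) (hV : IsOpen V)
    (hVb : Bornology.IsBounded V) (hKV : K ⊆ V)
    (h : ∀ x ∈ V \ K, ∃ i c, ∀ᶠ y in 𝓝 x, a y i = c ∧ b y i = c) :
    ∫ x in V, (fderiv ℝ a x).det = ∫ x in V, (fderiv ℝ b x).det := by
  obtain ⟨χ, hχ, hχc, hχV, hχone, -⟩ :=
    exists_contDiff_tsupport_subset_eventually_eq_one hK hV hKV
  set u : (ι → ℝ) → ι → ℝ := fun x ↦ χ x • (b x - a x) with hu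
  have hu1 : ContDiff ℝ 1 u := hχ.smul (hb.sub ha)
  have hau : ContDiff ℝ 1 (a + u) := ha.add hu1
  have hadd (x : ι → ℝ) : fderiv ℝ a x + fderiv ℝ u x = fderiv ℝ (a + u) x :=
    (fderiv_add (ha.differentiable one_ne_zero x) (hu1.differentiable one_ne_zero x)).symm
  have hcongr : ∀ x ∈ V, (fderiv ℝ (a + u) x).det = (fderiv ℝ b x).det := by
    intro x hx
    by_cases hxK : x ∈ K
    · have : a + u =ᶠ[𝓝 x] b := by
        filter_upwards [hχone x hxK] with y hy
        simp [hu, hy]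
      rw [this.fderiv_eq]
    · obtain ⟨i, c, hic⟩ := h x ⟨hx, hxK⟩
      rw [det_fderiv_eq_zero_of_eventually_apply_eq (hb.differentiable one_ne_zero x)
        (hic.mono fun _ hy ↦ hy.2), det_fderiv_eq_zero_of_eventually_apply_eq
        (hau.differentiable one_ne_zero x) (i := i) (c := c)]
      filter_upwards [hic] with y hy
      simp [hu, hy.1, hy.2]
  have hzero : ∀ x ∉ V, fderiv ℝ u x = 0 := by
    intro x hx
    by_contra hne
    exact hx (hχV (tsupport_smul_subset_left χ _ (support_fderiv_subset ℝ hne)))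
  have hint := integral_det_fderiv_add_sub_eq_zero (μ := volume) ha hu1 hχc.smul_right
  rw [← setIntegral_eq_integral_of_forall_compl_eq_zero (s := V)
    (fun x hx ↦ by rw [hzero x hx, add_zero, sub_self])] at hint
  simp_rw [hadd] at hint
  rw [setIntegral_congr_fun hV.measurableSet fun x hx ↦ congrArg (· - (fderiv ℝ a x).det)
    (hcongr x hx), integral_sub (integrableOn_det_fderiv hb hVb) (integrableOn_det_fderiv ha hVb),
    sub_eq_zero] at hint
  exact hint.symm

theorem exists_lt_abs_apply_of_lt_norm {y : ι → ℝ} {c : ℝ} (hc : 0 ≤ c) (h : c < ‖y‖) :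
    ∃ i, c < |y i| := by
  contrapose! h
  exact (pi_norm_le_iff_of_nonneg hc).2 h

theorem exists_eventually_stepMap_apply_eq {X : Type*} [TopologicalSpace X] {q₀ q₁ : X → ι → ℝ}
    {x : X} (h₀ : ContinuousAt q₀ x) (h₁ : ContinuousAt q₁ x) {δ₀ δ₁ δ r : ℝ} (hδ₀ : 0 < δ₀)
    (hδ₁ : 0 < δ₁) (hle₀ : δ₀ ≤ δ) (hle₁ : δ₁ ≤ δ) (hx : δ + r < ‖q₀ x‖)
    (hq : ‖q₁ x - q₀ x‖ < r) :
    ∃ i c, ∀ᶠ y in 𝓝 x, stepMap δ₀ (q₀ y) i = c ∧ stepMap δ₁ (q₁ y) i = c := by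
  have hr : 0 < r := (norm_nonneg _).trans_lt hq
  obtain ⟨i, hi⟩ := exists_lt_abs_apply_of_lt_norm (by linarith) hx
  have hsub := abs_lt.1 ((norm_le_pi_norm (q₁ x - q₀ x) i).trans_lt hq)
  simp only [Pi.sub_apply] at hsub
  have h₀i := continuousAt_pi.1 h₀ i
  have h₁i := continuousAt_pi.1 h₁ i
  rcases lt_abs.1 hi with hi | hi
  · refine ⟨i, 1, ?_⟩
    filter_upwards [h₀i.eventually (lt_mem_nhds (show δ < q₀ x i by linarith)),
      h₁i.eventually (lt_mem_nhds (show δ < q₁ x i by linarith))] with y hy₀ hy₁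
    exact ⟨smoothStep_eq_one hδ₀ (by linarith), smoothStep_eq_one hδ₁ (by linarith)⟩
  · refine ⟨i, 0, ?_⟩
    filter_upwards [h₀i.eventually (gt_mem_nhds (show q₀ x i < -δ by linarith)),
      h₁i.eventually (gt_mem_nhds (show q₁ x i < -δ by linarith))] with y hy₀ hy₁
    exact ⟨smoothStep_eq_zero hδ₀ (by linarith), smoothStep_eq_zero hδ₁ (by linarith)⟩

theorem degreeIntegral_congr {q₀ q₁ : (ι → ℝ) → ι → ℝ} (h₀ : ContDiff ℝ 1 q₀)
    (h₁ : ContDiff ℝ 1 q₁) {V : Set (ι → ℝ)} (hV : IsOpen V) (hVb : Bornology.IsBounded V)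
    {δ₀ δ₁ δ r : ℝ} (hδ₀ : 0 < δ₀) (hδ₁ : 0 < δ₁) (hle₀ : δ₀ ≤ δ) (hle₁ : δ₁ ≤ δ)
    (hq : ∀ x ∈ V, ‖q₁ x - q₀ x‖ < r) (hf : ∀ x ∈ frontier V, δ + r < ‖q₀ x‖) :
    degreeIntegral δ₀ q₀ V = degreeIntegral δ₁ q₁ V := by
  refine setIntegral_det_fderiv_congr (K := closure V ∩ {x | ‖q₀ x‖ ≤ δ + r})
    ((contDiff_stepMap δ₀).comp h₀) ((contDiff_stepMap δ₁).comp h₁)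
    (hVb.isCompact_closure.inter_right (isClosed_le h₀.continuous.norm continuous_const))
    hV hVb ?_ ?_
  · rintro x ⟨hx, hle⟩
    by_contra hxV
    exact (hf x (hV.frontier_eq ▸ ⟨hx, hxV⟩)).not_ge hle
  · rintro x ⟨hx, hxK⟩
    have hlt : δ + r < ‖q₀ x‖ := not_le.1 fun h ↦ hxK ⟨subset_closure hx, h⟩
    exact exists_eventually_stepMap_apply_eq h₀.continuous.continuousAt
      h₁.continuous.continuousAt hδ₀ hδ₁ hle₀ hle₁ hlt (hq x hx)

theorem det_fderiv_stepMap_comp_eq_zero {q : (ι → ℝ) → ι → ℝ} (hq : ContDiff ℝ 1 q) {δ : ℝ}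
    (hδ : 0 < δ) {x : ι → ℝ} (hx : δ < ‖q x‖) : (fderiv ℝ (stepMap δ ∘ q) x).det = 0 := by
  obtain ⟨b, hδb, hb⟩ := exists_between hx
  obtain ⟨i, c, hic⟩ := exists_eventually_stepMap_apply_eq hq.continuous.continuousAt
    hq.continuous.continuousAt hδ hδ le_rfl le_rfl
    (r := b - δ) (by linarith) (by simpa using hδb)
  exact det_fderiv_eq_zero_of_eventually_apply_eq
    (((contDiff_stepMap δ).comp hq).differentiable one_ne_zero x) (hic.mono fun _ hy ↦ hy.1)

theorem degreeIntegral_eq_of_subset {q : (ι → ℝ) → ι → ℝ} (hq : ContDiff ℝ 1 q) {δ : ℝ}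
    (hδ : 0 < δ) {N V : Set (ι → ℝ)} (hV : MeasurableSet V) (hN : N ⊆ V)
    (h : ∀ x ∈ V \ N, δ < ‖q x‖) : degreeIntegral δ q V = degreeIntegral δ q N :=
  setIntegral_eq_of_subset_of_forall_sdiff_eq_zero hV hN fun x hx ↦
    det_fderiv_stepMap_comp_eq_zero hq hδ (h x hx)

end DegreeIntegral

section RegularZeros

variable {ι : Type*} [Fintype ι]

theorem degreeIntegral_eq_of_injOn {q : (ι → ℝ) → ι → ℝ} (hq : ContDiff ℝ 1 q) {δ : ℝ}
    (hδ : 0 < δ) {N : Set (ι → ℝ)} (hN : MeasurableSet N) (hinj : InjOn q N) {σ : ℝ}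
    (hσ : ∀ x ∈ N, (fderiv ℝ q x).det = σ * |(fderiv ℝ q x).det|)
    (hball : closedBall 0 δ ⊆ q '' N) : degreeIntegral δ q N = σ := by
  have hintegrand : ∀ x ∈ N, (fderiv ℝ (stepMap δ ∘ q) x).det =
      σ * |(fderiv ℝ q x).det| • (fderiv ℝ (stepMap δ) (q x)).det := by
    intro x hx
    rw [fderiv_comp x ((contDiff_stepMap δ).differentiable one_ne_zero _)
      (hq.differentiable one_ne_zero x), smul_eq_mul, ← mul_assoc, ← hσ x hx, mul_comm]
    exact LinearMap.det_comp _ _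
  have hzero : ∀ y ∉ q '' N, (fderiv ℝ (stepMap δ) y).det = 0 := fun y hy ↦
    det_fderiv_stepMap_comp_eq_zero contDiff_id hδ
      (not_le.1 fun h ↦ hy (hball (mem_closedBall_zero_iff.2 h)))
  rw [degreeIntegral, setIntegral_congr_fun hN hintegrand, integral_const_mul,
    ← integral_image_eq_integral_abs_det_fderiv_smul volume hN
      (fun x _ ↦ (hq.differentiable one_ne_zero x).hasFDerivAt.hasFDerivWithinAt) hinj
      (fun y ↦ (fderiv ℝ (stepMap δ) y).det),
    setIntegral_eq_integral_of_forall_compl_eq_zero hzero, integral_det_fderiv_stepMap hδ, mul_one]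

theorem exists_isOpen_degreeIntegral_eq_intCast {q : (ι → ℝ) → ι → ℝ} (hq : ContDiff ℝ 1 q)
    {x : ι → ℝ} (hx : q x = 0) (hdet : (fderiv ℝ q x).det ≠ 0) {U : Set (ι → ℝ)} (hU : U ∈ 𝓝 x) :
    ∃ N ⊆ U, IsOpen N ∧ x ∈ N ∧ (∀ y ∈ N, q y = 0 → y = x) ∧
      ∃ σ : ℤ, ∀ᶠ δ in 𝓝[>] (0 : ℝ), degreeIntegral δ q N = σ := by
  have hstrict : HasStrictFDerivAt q (ContinuousLinearMap.toContinuousLinearEquivOfDetNeZero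
      (fderiv ℝ q x) hdet : (ι → ℝ) →L[ℝ] ι → ℝ) x :=
    hq.contDiffAt.hasStrictFDerivAt one_ne_zero
  let Φ := hstrict.toOpenPartialHomeomorph q
  set D : (ι → ℝ) → ℝ := fun y ↦ (fderiv ℝ q y).det
  have hDcont : Continuous D :=
    ContinuousLinearMap.continuous_det.comp (hq.continuous_fderiv one_ne_zero)
  let N := Φ.source ∩ interior U ∩ {y | 0 < D x * D y}
  have hN : IsOpen N := (Φ.open_source.inter isOpen_interior).inter
    (isOpen_lt continuous_const (continuous_const.mul hDcont))
  have hxN : x ∈ N := ⟨⟨hstrict.mem_toOpenPartialHomeomorph_source,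
    mem_interior_iff_mem_nhds.2 hU⟩, mul_self_pos.2 hdet⟩
  have hinj : InjOn q N := Φ.injOn.mono fun y hy ↦ hy.1.1
  refine ⟨N, fun y hy ↦ interior_subset hy.1.2, hN, hxN,
    fun y hy h ↦ hinj hy hxN (h.trans hx.symm), SignType.sign (D x), ?_⟩
  have hsign : ∀ y ∈ N, D y = ((SignType.sign (D x) : ℤ) : ℝ) * |D y| := by
    intro y hy
    have hxy : 0 < D x * D y := hy.2
    rcases pos_and_pos_or_neg_and_neg_of_mul_pos hxy with ⟨hpos, hpos'⟩ | ⟨hneg, hneg'⟩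
    · simp [sign_pos hpos, abs_of_pos hpos']
    · simp [sign_neg hneg, abs_of_neg hneg']
  have himage : q '' N ∈ 𝓝 (0 : ι → ℝ) :=
    (Φ.isOpen_image_of_subset_source hN fun y hy ↦ hy.1.1).mem_nhds ⟨x, hxN, hx⟩
  obtain ⟨r, hr, hrN⟩ := nhds_basis_closedBall.mem_iff.1 himage
  filter_upwards [Ioc_mem_nhdsGT hr] with δ hδ
  exact degreeIntegral_eq_of_injOn hq hδ.1 hN.measurableSet hinj hsign
    ((closedBall_subset_closedBall hδ.2).trans hrN)

theorem finite_zeros_of_det_fderiv_ne_zero {q : (ι → ℝ) → ι → ℝ} (hq : ContDiff ℝ 1 q)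
    (hreg : ∀ x, q x = 0 → (fderiv ℝ q x).det ≠ 0) {K : Set (ι → ℝ)} (hK : IsCompact K) :
    (K ∩ {x | q x = 0}).Finite := by
  refine (hK.inter_right (isClosed_eq hq.continuous continuous_const)).finite ?_
  refine isDiscrete_iff_forall_mem_exists_isOpen.2 fun x hx ↦ ?_
  obtain ⟨N, -, hN, hxN, huniq, -⟩ :=
    exists_isOpen_degreeIntegral_eq_intCast hq hx.2 (hreg x hx.2) univ_mem
  exact ⟨N, hN, Subset.antisymm (fun y hy ↦ huniq y hy.1 hy.2.2) (singleton_subset_iff.2 ⟨hxN, hx⟩)⟩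

theorem exists_eventually_degreeIntegral_eq_intCast {q : (ι → ℝ) → ι → ℝ} (hq : ContDiff ℝ 1 q)
    {V : Set (ι → ℝ)} (hV : IsOpen V) (hVb : Bornology.IsBounded V)
    (hf : ∀ x ∈ frontier V, q x ≠ 0) (hreg : ∀ x, q x = 0 → (fderiv ℝ q x).det ≠ 0) :
    ∃ m : ℤ, ∀ᶠ δ in 𝓝[>] (0 : ℝ), degreeIntegral δ q V = m := by
  set Z := closure V ∩ {x | q x = 0}
  have hZV : Z ⊆ V := fun x ⟨hx, hx0⟩ ↦
    by_contra fun hxV ↦ hf x (hV.frontier_eq ▸ ⟨hx, hxV⟩) hx0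
  have hfin : Z.Finite := finite_zeros_of_det_fderiv_ne_zero hq hreg hVb.isCompact_closure
  obtain ⟨U, hU, hUdisj⟩ := hfin.t2_separation
  have hlocal : ∀ x ∈ Z, ∃ N ⊆ U x ∩ V, IsOpen N ∧ x ∈ N ∧
      ∃ σ : ℤ, ∀ᶠ δ in 𝓝[>] (0 : ℝ), degreeIntegral δ q N = σ := by
    intro x hx
    obtain ⟨N, hNU, hN, hxN, -, hσ⟩ := exists_isOpen_degreeIntegral_eq_intCast hq hx.2
      (hreg x hx.2) (inter_mem ((hU x).2.mem_nhds (hU x).1) (hV.mem_nhds (hZV hx)))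
    exact ⟨N, hNU, hN, hxN, hσ⟩
  choose! N hNU hN hxN σ hσ using hlocal
  lift Z to Finset (ι → ℝ) using hfin with t ht
  have hzeros : ∀ x ∈ closure V \ ⋃ x ∈ t, N x, 0 < ‖q x‖ := fun x ⟨hxV, hxN'⟩ ↦
    norm_pos_iff.2 fun hx0 ↦
      have hxt : x ∈ (t : Set (ι → ℝ)) := ht.symm ▸ ⟨hxV, hx0⟩
      hxN' (mem_biUnion hxt (hxN x hxt))
  obtain ⟨c, hc, hcV⟩ := (hVb.isCompact_closure.diff (isOpen_biUnion hN)).exists_forall_le'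
    hq.continuous.norm.continuousOn hzeros
  refine ⟨∑ x ∈ t, σ x, ?_⟩
  filter_upwards [(eventually_all_finset t).2 hσ, Ioo_mem_nhdsGT hc] with δ hδσ hδ
  rw [degreeIntegral_eq_of_subset hq hδ.1 hV.measurableSet (N := ⋃ x ∈ t, N x)
    (iUnion₂_subset fun x hx ↦ (hNU x hx).trans inter_subset_right)
    fun x hx ↦ hδ.2.trans_le (hcV x ⟨subset_closure hx.1, hx.2⟩), degreeIntegral,
    integral_biUnion_finset t fun x hx ↦ (hN x hx).measurableSet]
  · push_cast
    exact Finset.sum_congr rfl hδσ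
  · exact fun x hx y hy hxy ↦ (hUdisj hx hy hxy).mono ((hNU x hx).trans inter_subset_left)
      ((hNU y hy).trans inter_subset_left)
  · exact fun x hx ↦ integrableOn_det_fderiv ((contDiff_stepMap δ).comp hq)
      (hVb.subset ((hNU x hx).trans inter_subset_right))

-- By Sard's theorem `0` becomes a regular value after subtracting a small constant.
theorem exists_degreeIntegral_eq_intCast {q : (ι → ℝ) → ι → ℝ} (hq : ContDiff ℝ 1 q)
    {V : Set (ι → ℝ)} (hV : IsOpen V) (hVb : Bornology.IsBounded V) {δ : ℝ} (hδ : 0 < δ)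
    (hf : ∀ x ∈ frontier V, 2 * δ < ‖q x‖) : ∃ m : ℤ, degreeIntegral δ q V = m := by
  have hsard : volume (q '' {x | (fderiv ℝ q x).det = 0}) = 0 :=
    addHaar_image_eq_zero_of_det_fderivWithin_eq_zero volume
      (fun x _ ↦ (hq.differentiable one_ne_zero x).hasFDerivAt.hasFDerivWithinAt) fun x hx ↦ hx
  obtain ⟨v, hv, hvreg⟩ : ∃ v ∈ ball (0 : ι → ℝ) δ, v ∉ q '' {x | (fderiv ℝ q x).det = 0} := by
    by_contra! h
    exact (measure_ball_pos volume (0 : ι → ℝ) hδ).ne' (measure_mono_null h hsard)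
  rw [mem_ball_zero_iff] at hv
  have hqv : ContDiff ℝ 1 fun x ↦ q x - v := hq.sub contDiff_const
  have hfv : ∀ x ∈ frontier V, q x - v ≠ 0 := by
    intro x hx h
    have := hf x hx
    rw [sub_eq_zero.1 h] at this
    linarith
  have hreg : ∀ x, q x - v = 0 → (fderiv ℝ (fun x ↦ q x - v) x).det ≠ 0 := fun x hx hdet ↦
    hvreg ⟨x, by rwa [fderiv_sub_const] at hdet, sub_eq_zero.1 hx⟩
  obtain ⟨m, hm⟩ := exists_eventually_degreeIntegral_eq_intCast hqv hV hVb hfv hreg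
  obtain ⟨δ', hδ'm, hδ'⟩ := (hm.and (Ioc_mem_nhdsGT hδ)).exists
  refine ⟨m, ?_⟩
  rw [← hδ'm]
  exact degreeIntegral_congr hq hqv hV hVb hδ hδ'.1 le_rfl hδ'.2
    (fun x _ ↦ by simpa using hv) fun x hx ↦ by linarith [hf x hx]

end RegularZeros

section BrouwerDegree

section Admissible

variable {X E : Type*} [TopologicalSpace X] [Zero E] {F G : X → E}
  {N N' V V₁ V₂ : Set X}

/-- A relatively compact open neighbourhood `N` of the zeros of `F` in `V`, on which the degree of
`F` on `V` is computed. -/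
structure IsIsolatingNhd (F : X → E) (V N : Set X) : Prop where
  isOpen : IsOpen N
  isCompact_closure : IsCompact (closure N)
  closure_subset : closure N ⊆ V
  zeros_subset : V ∩ F ⁻¹' {0} ⊆ N

namespace IsIsolatingNhd

theorem ne_zero (h : IsIsolatingNhd F V N) {x : X} (hx : x ∈ V) (hxN : x ∉ N) : F x ≠ 0 :=
  fun h0 ↦ hxN (h.zeros_subset ⟨hx, h0⟩)

theorem ne_zero_of_mem_frontier (h : IsIsolatingNhd F V N) {x : X} (hx : x ∈ frontier N) :
    F x ≠ 0 := by
  rw [h.isOpen.frontier_eq] at hx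
  exact h.ne_zero (h.closure_subset hx.1) hx.2

theorem inter (h : IsIsolatingNhd F V N) (h' : IsIsolatingNhd F V N') :
    IsIsolatingNhd F V (N ∩ N') where
  isOpen := h.isOpen.inter h'.isOpen
  isCompact_closure := h.isCompact_closure.of_isClosed_subset isClosed_closure
    (closure_mono inter_subset_left)
  closure_subset := (closure_mono inter_subset_left).trans h.closure_subset
  zeros_subset := subset_inter h.zeros_subset h'.zeros_subset

theorem congr (h : IsIsolatingNhd F V N) (hFG : EqOn F G V) :
    IsIsolatingNhd G V N :=
  { h with zeros_subset := hFG.inter_preimage_eq {0} ▸ h.zeros_subset }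

end IsIsolatingNhd

variable [TopologicalSpace E]

/-- The condition under which `F` has a Brouwer degree over `0` on the open set `V`, which need not
be bounded: the zeros of `F` in `V` form a compact set. -/
structure BrouwerAdmissible (F : X → E) (V : Set X) : Prop where
  isOpen : IsOpen V
  continuousOn : ContinuousOn F V
  isCompact_zeros : IsCompact (V ∩ F ⁻¹' {0})

namespace BrouwerAdmissible

theorem exists_isIsolatingNhd [LocallyCompactSpace X] [RegularSpace X]
    (h : BrouwerAdmissible F V) :
    ∃ N, IsIsolatingNhd F V N := by
  obtain ⟨N, hN, hzN, hNV, hNc⟩ :=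
    exists_open_between_and_isCompact_closure h.isCompact_zeros h.isOpen inter_subset_left
  exact ⟨N, hN, hNc, hNV, hzN⟩

theorem congr (h : BrouwerAdmissible F V) (hFG : EqOn F G V) : BrouwerAdmissible G V where
  isOpen := h.isOpen
  continuousOn := h.continuousOn.congr hFG.symm
  isCompact_zeros := hFG.inter_preimage_eq {0} ▸ h.isCompact_zeros

theorem of_disjoint (h : BrouwerAdmissible F V) (hV₁ : IsOpen V₁) (hV₂ : IsOpen V₂)
    (hsub : V₁ ⊆ V) (hdisj : Disjoint V₁ V₂) (hz : V ∩ F ⁻¹' {0} ⊆ V₁ ∪ V₂) :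
    BrouwerAdmissible F V₁ where
  isOpen := hV₁
  continuousOn := h.continuousOn.mono hsub
  isCompact_zeros := by
    convert h.isCompact_zeros.diff hV₂ using 1
    ext x
    exact ⟨fun hx ↦ ⟨⟨hsub hx.1, hx.2⟩, hdisj.notMem_of_mem_left hx.1⟩,
      fun hx ↦ ⟨(hz hx.1).resolve_right hx.2, hx.1.2⟩⟩

theorem union (h₁ : BrouwerAdmissible F V₁) (h₂ : BrouwerAdmissible F V₂) :
    BrouwerAdmissible F (V₁ ∪ V₂) where
  isOpen := h₁.isOpen.union h₂.isOpen
  continuousOn := h₁.continuousOn.union_of_isOpen h₂.continuousOn h₁.isOpen h₂.isOpen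
  isCompact_zeros := by
    rw [union_inter_distrib_right]
    exact h₁.isCompact_zeros.union h₂.isCompact_zeros

theorem slice {H : ℝ × X → E} {Q : Set (ℝ × X)} (hQ : IsOpen Q)
    (hH : ContinuousOn H Q) {I : Set ℝ}
    (hzeros : IsCompact (Q ∩ {p | p.1 ∈ I ∧ H p = 0})) {t : ℝ} (ht : t ∈ I) :
    BrouwerAdmissible (fun y ↦ H (t, y)) {y | (t, y) ∈ Q} where
  isOpen := hQ.preimage (by fun_prop)
  continuousOn := hH.comp (by fun_prop) fun _ hy ↦ hy
  isCompact_zeros := by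
    convert (hzeros.inter_right (isClosed_eq continuous_fst continuous_const :
      IsClosed {p : ℝ × X | p.1 = t})).image continuous_snd using 1
    ext y
    exact ⟨fun h ↦ ⟨(t, y), ⟨⟨h.1, ht, h.2⟩, rfl⟩, rfl⟩,
      by rintro ⟨⟨_, _⟩, ⟨h, rfl⟩, rfl⟩; exact ⟨h.1, h.2.2⟩⟩

end BrouwerAdmissible

end Admissible

theorem exists_contDiff_forall_norm_sub_lt {E E' : Type*} [NormedAddCommGroup E]
    [NormedSpace ℝ E] [FiniteDimensional ℝ E] [NormedAddCommGroup E'] [NormedSpace ℝ E']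
    [FiniteDimensional ℝ E'] {F : E → E'} {K : Set E} (hK : IsCompact K) (hF : ContinuousOn F K)
    {r : ℝ} (hr : 0 < r) : ∃ q : E → E', ContDiff ℝ 1 q ∧ ∀ x ∈ K, ‖q x - F x‖ < r := by
  obtain ⟨g, hg⟩ := ContinuousMap.exists_restrict_eq hK.isClosed ⟨K.domRestrict F, hF.domRestrict⟩
  obtain ⟨q, hq, hqr, -⟩ := g.continuous.exists_contDiff_approx 1 continuous_const fun _ ↦ hr
  refine ⟨q, hq, fun x hx ↦ ?_⟩
  have hgx : g x = F x := congrArg (fun f : C(K, E') ↦ f ⟨x, hx⟩) hg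
  rw [← hgx, ← dist_eq_norm]
  exact hqr x

variable {ι : Type*} [Fintype ι] {F G : (ι → ℝ) → ι → ℝ} {N N' V V₁ V₂ : Set (ι → ℝ)} {m m' : ℤ}

theorem degreeIntegral_congr_of_norm_sub_lt (hN : IsOpen N) (hNc : IsCompact (closure N)) {c : ℝ}
    (hc : ∀ x ∈ frontier N, c ≤ ‖F x‖) {q₀ q₁ : (ι → ℝ) → ι → ℝ} (h₀ : ContDiff ℝ 1 q₀)
    (h₁ : ContDiff ℝ 1 q₁) {δ₀ δ₁ : ℝ} (hδ₀ : δ₀ ∈ Ioc 0 (c / 4)) (hδ₁ : δ₁ ∈ Ioc 0 (c / 4))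
    (hq₀ : ∀ x ∈ closure N, ‖q₀ x - F x‖ < c / 4) (hq₁ : ∀ x ∈ closure N, ‖q₁ x - F x‖ < c / 4) :
    degreeIntegral δ₀ q₀ N = degreeIntegral δ₁ q₁ N := by
  refine degreeIntegral_congr (r := c / 2) h₀ h₁ hN (hNc.isBounded.subset subset_closure)
    hδ₀.1 hδ₁.1 hδ₀.2 hδ₁.2 (fun x hx ↦ ?_) fun x hx ↦ ?_
  · have := norm_sub_le_norm_sub_add_norm_sub (q₁ x) (F x) (q₀ x)
    rw [norm_sub_rev (F x)] at this
    linarith [hq₀ x (subset_closure hx), hq₁ x (subset_closure hx)]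
  · have := norm_sub_norm_le (F x) (q₀ x)
    rw [norm_sub_rev] at this
    linarith [hc x hx, hq₀ x (frontier_subset_closure hx)]

/-- The integer `m` is the degree of `F` on the relatively compact open set `N`, computed by the
degree integrals of the smooth maps close to `F` on the closure of `N`. -/
def HasApproxDegree (F : (ι → ℝ) → ι → ℝ) (N : Set (ι → ℝ)) (m : ℤ) : Prop :=
  ∀ᶠ r in 𝓝[>] (0 : ℝ), ∀ q, ContDiff ℝ 1 q → (∀ x ∈ closure N, ‖q x - F x‖ < r) →
    degreeIntegral r q N = m

theorem exists_hasApproxDegree (hN : IsOpen N) (hNc : IsCompact (closure N))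
    (hF : ContinuousOn F (closure N)) (h0 : ∀ x ∈ frontier N, F x ≠ 0) :
    ∃ m, HasApproxDegree F N m := by
  obtain ⟨c, hc, hcF⟩ := (hNc.of_isClosed_subset isClosed_frontier
    frontier_subset_closure).exists_forall_le' (hF.mono frontier_subset_closure).norm
    fun x hx ↦ norm_pos_iff.2 (h0 x hx)
  have hc4 : 0 < c / 4 := by positivity
  obtain ⟨q₀, hq₀, hq₀F⟩ := exists_contDiff_forall_norm_sub_lt hNc hF hc4
  obtain ⟨m, hm⟩ := exists_degreeIntegral_eq_intCast hq₀ hN (hNc.isBounded.subset subset_closure)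
    hc4 fun x hx ↦ by
      have := norm_sub_norm_le (F x) (q₀ x)
      rw [norm_sub_rev] at this
      linarith [hcF x hx, hq₀F x (frontier_subset_closure hx)]
  refine ⟨m, ?_⟩
  filter_upwards [Ioo_mem_nhdsGT hc4] with r hr q hq hqF
  rw [← hm]
  exact degreeIntegral_congr_of_norm_sub_lt hN hNc hcF hq hq₀ ⟨hr.1, hr.2.le⟩ ⟨hc4, le_rfl⟩
    (fun x hx ↦ (hqF x hx).trans hr.2) hq₀F

theorem HasApproxDegree.unique (hNc : IsCompact (closure N)) (hF : ContinuousOn F (closure N))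
    (h : HasApproxDegree F N m) (h' : HasApproxDegree F N m') : m = m' := by
  obtain ⟨r, ⟨hr, hr'⟩, hpos⟩ := ((h.and h').and self_mem_nhdsWithin).exists
  obtain ⟨q, hq, hqF⟩ := exists_contDiff_forall_norm_sub_lt hNc hF hpos
  exact_mod_cast (hr q hq hqF).symm.trans (hr' q hq hqF)

theorem HasApproxDegree.exists_forall_norm_sub_lt (hN : IsOpen N) (hNc : IsCompact (closure N))
    (hF : ContinuousOn F (closure N)) (h0 : ∀ x ∈ frontier N, F x ≠ 0)
    (h : HasApproxDegree F N m) :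
    ∃ ε > 0, ∀ G : (ι → ℝ) → ι → ℝ, (∀ x ∈ closure N, ‖G x - F x‖ < ε) →
      HasApproxDegree G N m := by
  obtain ⟨c, hc, hcF⟩ := (hNc.of_isClosed_subset isClosed_frontier
    frontier_subset_closure).exists_forall_le' (hF.mono frontier_subset_closure).norm
    fun x hx ↦ norm_pos_iff.2 (h0 x hx)
  refine ⟨c / 8, by positivity, fun G hG ↦ ?_⟩
  filter_upwards [h, Ioo_mem_nhdsGT (show 0 < c / 8 by positivity)] with r hr hrc q hq hqG
  obtain ⟨q₀, hq₀, hq₀F⟩ := exists_contDiff_forall_norm_sub_lt hNc hF hrc.1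
  have hrc' : r ≤ c / 4 := by linarith [hrc.2]
  rw [← hr q₀ hq₀ hq₀F]
  refine degreeIntegral_congr_of_norm_sub_lt hN hNc hcF hq hq₀ ⟨hrc.1, hrc'⟩ ⟨hrc.1, hrc'⟩
    (fun x hx ↦ ?_) fun x hx ↦ (hq₀F x hx).trans_le hrc'
  linarith [norm_sub_le_norm_sub_add_norm_sub (q x) (G x) (F x), hqG x hx, hG x hx, hrc.2]

theorem HasApproxDegree.union (hNc : IsCompact (closure N)) (hN' : IsOpen N')
    (hN'c : IsCompact (closure N')) (hdisj : Disjoint N N') (h : HasApproxDegree F N m)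
    (h' : HasApproxDegree F N' m') : HasApproxDegree F (N ∪ N') (m + m') := by
  filter_upwards [h, h'] with r hr hr' q hq hqF
  have hint {B : Set (ι → ℝ)} (hB : IsCompact (closure B)) :=
    integrableOn_det_fderiv ((contDiff_stepMap r).comp hq) (hB.isBounded.subset subset_closure)
  rw [closure_union] at hqF
  rw [degreeIntegral, setIntegral_union hdisj hN'.measurableSet (hint hNc) (hint hN'c),
    Int.cast_add, ← hr q hq fun x hx ↦ hqF x (Or.inl hx), ← hr' q hq fun x hx ↦ hqF x (Or.inr hx)]
  rfl

theorem HasApproxDegree.of_subset (hN : IsOpen N) (hNc : IsCompact (closure N))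
    (hF : ContinuousOn F (closure N)) (hN' : IsOpen N') (hsub : N' ⊆ N)
    (h0 : ∀ x ∈ closure N \ N', F x ≠ 0) (h : HasApproxDegree F N' m) :
    HasApproxDegree F N m := by
  obtain ⟨c, hc, hcF⟩ := (hNc.diff hN').exists_forall_le' (hF.mono sdiff_subset).norm
    fun x hx ↦ norm_pos_iff.2 (h0 x hx)
  filter_upwards [h, Ioo_mem_nhdsGT (show 0 < c / 2 by positivity)] with r hr hrc q hq hqF
  rw [degreeIntegral_eq_of_subset hq hrc.1 hN.measurableSet hsub fun x hx ↦ ?_]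
  · exact hr q hq fun x hx ↦ hqF x (closure_mono hsub hx)
  · have hxN := subset_closure hx.1
    have := norm_sub_norm_le (F x) (q x)
    rw [norm_sub_rev] at this
    linarith [hcF x ⟨hxN, hx.2⟩, hqF x hxN, hrc.2]

namespace IsIsolatingNhd

theorem exists_hasApproxDegree (h : IsIsolatingNhd F V N) (hF : ContinuousOn F V) :
    ∃ m, HasApproxDegree F N m :=
  _root_.exists_hasApproxDegree h.isOpen h.isCompact_closure (hF.mono h.closure_subset)
    fun _ ↦ h.ne_zero_of_mem_frontier

theorem hasApproxDegree_of_hasApproxDegree (h : IsIsolatingNhd F V N)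
    (h' : IsIsolatingNhd F V N') (hF : ContinuousOn F V) (hm : HasApproxDegree F N m) :
    HasApproxDegree F N' m := by
  obtain ⟨k, hk⟩ := (h.inter h').exists_hasApproxDegree hF
  have hkN : HasApproxDegree F N k := hk.of_subset h.isOpen h.isCompact_closure
    (hF.mono h.closure_subset) (h.inter h').isOpen inter_subset_left
    fun x hx ↦ (h.inter h').ne_zero (h.closure_subset hx.1) hx.2
  rw [hm.unique h.isCompact_closure (hF.mono h.closure_subset) hkN]
  exact hk.of_subset h'.isOpen h'.isCompact_closure (hF.mono h'.closure_subset)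
    (h.inter h').isOpen inter_subset_right
    fun x hx ↦ (h.inter h').ne_zero (h'.closure_subset hx.1) hx.2

end IsIsolatingNhd

open Classical in
/-- The Brouwer degree of `F` on `V` over the value `0`, with the junk value `0` when there is no
isolating neighbourhood of the zeros. -/
noncomputable def brouwerDegree (F : (ι → ℝ) → ι → ℝ) (V : Set (ι → ℝ)) : ℤ :=
  if h : ∃ m, ∃ N, IsIsolatingNhd F V N ∧ HasApproxDegree F N m then h.choose else 0

theorem HasApproxDegree.congr (h : HasApproxDegree F N m) (hFG : EqOn F G (closure N)) :
    HasApproxDegree G N m :=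
  h.mono fun _ hr q hq hqG ↦ hr q hq fun x hx ↦ hFG hx ▸ hqG x hx

theorem brouwerDegree_congr (hFG : EqOn F G V) : brouwerDegree F V = brouwerDegree G V := by
  have hcongr {F G : (ι → ℝ) → ι → ℝ} (hFG : EqOn F G V) {m : ℤ} :
      (∃ N, IsIsolatingNhd F V N ∧ HasApproxDegree F N m) →
        ∃ N, IsIsolatingNhd G V N ∧ HasApproxDegree G N m :=
    fun ⟨N, hN, hm⟩ ↦ ⟨N, hN.congr hFG, hm.congr (hFG.mono hN.closure_subset)⟩
  have hpred : (fun m ↦ ∃ N, IsIsolatingNhd F V N ∧ HasApproxDegree F N m) =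
      fun m ↦ ∃ N, IsIsolatingNhd G V N ∧ HasApproxDegree G N m :=
    funext fun _ ↦ propext ⟨hcongr hFG, hcongr hFG.symm⟩
  unfold brouwerDegree
  congr!

namespace BrouwerAdmissible

theorem hasApproxDegree (h : BrouwerAdmissible F V) (hN : IsIsolatingNhd F V N) :
    HasApproxDegree F N (brouwerDegree F V) := by
  obtain ⟨m, hm⟩ := hN.exists_hasApproxDegree h.continuousOn
  have hex : ∃ m, ∃ N, IsIsolatingNhd F V N ∧ HasApproxDegree F N m := ⟨m, N, hN, hm⟩
  obtain ⟨N', hN', hm'⟩ := hex.choose_spec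
  rw [brouwerDegree, dif_pos hex]
  exact hN'.hasApproxDegree_of_hasApproxDegree hN h.continuousOn hm'

theorem brouwerDegree_eq (h : BrouwerAdmissible F V) (hN : IsIsolatingNhd F V N)
    (hm : HasApproxDegree F N m) : brouwerDegree F V = m :=
  (h.hasApproxDegree hN).unique hN.isCompact_closure (h.continuousOn.mono hN.closure_subset) hm

theorem brouwerDegree_eq_add (h : BrouwerAdmissible F V) (hV₁ : IsOpen V₁) (hV₂ : IsOpen V₂)
    (hsub₁ : V₁ ⊆ V) (hsub₂ : V₂ ⊆ V) (hdisj : Disjoint V₁ V₂)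
    (hz : V ∩ F ⁻¹' {0} ⊆ V₁ ∪ V₂) :
    brouwerDegree F V = brouwerDegree F V₁ + brouwerDegree F V₂ := by
  have h₁ := h.of_disjoint hV₁ hV₂ hsub₁ hdisj hz
  have h₂ := h.of_disjoint hV₂ hV₁ hsub₂ hdisj.symm (union_comm V₁ V₂ ▸ hz)
  obtain ⟨N₁, hN₁⟩ := h₁.exists_isIsolatingNhd
  obtain ⟨N₂, hN₂⟩ := h₂.exists_isIsolatingNhd
  have hN : IsIsolatingNhd F V (N₁ ∪ N₂) := by
    refine ⟨hN₁.isOpen.union hN₂.isOpen, ?_, ?_, fun x hx ↦ (hz hx).imp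
      (fun hx₁ ↦ hN₁.zeros_subset ⟨hx₁, hx.2⟩) fun hx₂ ↦ hN₂.zeros_subset ⟨hx₂, hx.2⟩⟩
    · exact closure_union (s := N₁) ▸ hN₁.isCompact_closure.union hN₂.isCompact_closure
    · exact closure_union.trans_subset
        (union_subset (hN₁.closure_subset.trans hsub₁) (hN₂.closure_subset.trans hsub₂))
  exact h.brouwerDegree_eq hN <| (h₁.hasApproxDegree hN₁).union hN₁.isCompact_closure hN₂.isOpen
    hN₂.isCompact_closure (hdisj.mono (subset_closure.trans hN₁.closure_subset)
      (subset_closure.trans hN₂.closure_subset)) (h₂.hasApproxDegree hN₂)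

end BrouwerAdmissible

theorem brouwerDegree_eq_zero (hV : IsOpen V) (hF : ContinuousOn F V) (h0 : ∀ x ∈ V, F x ≠ 0) :
    brouwerDegree F V = 0 := by
  have hzeros : V ∩ F ⁻¹' {0} = ∅ := eq_empty_of_forall_notMem fun x hx ↦ h0 x hx.1 hx.2
  refine BrouwerAdmissible.brouwerDegree_eq ⟨hV, hF, hzeros ▸ isCompact_empty⟩ (N := ∅)
    ⟨isOpen_empty, by simp, by simp, hzeros.subset⟩ (Eventually.of_forall fun r q _ _ ↦ ?_)
  simp [degreeIntegral]

theorem brouwerDegree_biUnion_finset {κ : Type*} (s : Finset κ) {V : κ → Set (ι → ℝ)}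
    (h : ∀ i ∈ s, BrouwerAdmissible F (V i)) (hdisj : (s : Set κ).PairwiseDisjoint V) :
    BrouwerAdmissible F (⋃ i ∈ s, V i) ∧
      brouwerDegree F (⋃ i ∈ s, V i) = ∑ i ∈ s, brouwerDegree F (V i) := by
  classical
  induction s using Finset.induction_on with
  | empty =>
    simpa using And.intro (BrouwerAdmissible.mk isOpen_empty (continuousOn_empty F) (by simp))
      (brouwerDegree_eq_zero isOpen_empty (continuousOn_empty F) (by simp))
  | insert i s hi ih =>
    simp only [Finset.coe_insert, Finset.forall_mem_insert] at h hdisj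
    obtain ⟨hs, hsum⟩ := ih h.2 (hdisj.subset (subset_insert i _))
    have hdisj' : Disjoint (V i) (⋃ j ∈ s, V j) := disjoint_iUnion₂_right.2 fun j hj ↦
      hdisj (mem_insert i _) (mem_insert_of_mem i hj) (ne_of_mem_of_not_mem hj hi).symm
    rw [Finset.set_biUnion_insert, Finset.sum_insert hi, ← hsum]
    exact ⟨h.1.union hs, (h.1.union hs).brouwerDegree_eq_add h.1.isOpen hs.isOpen
      subset_union_left subset_union_right hdisj' inter_subset_left⟩

theorem brouwerDegree_sub_const_eq_one (hV : IsOpen V) {c : ι → ℝ} (hc : c ∈ V) :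
    brouwerDegree (fun x ↦ x - c) V = 1 := by
  have hq : ContDiff ℝ 1 fun x : ι → ℝ ↦ x - c := contDiff_id.sub contDiff_const
  have hzeros : V ∩ (fun x ↦ x - c) ⁻¹' {0} = {c} := by
    ext x
    simp only [mem_inter_iff, mem_preimage, mem_singleton_iff, sub_eq_zero, and_iff_right_iff_imp]
    exact fun h ↦ h ▸ hc
  obtain ⟨ρ, hρ, hρV⟩ := nhds_basis_closedBall.mem_iff.1 (hV.mem_nhds hc)
  have hadm : BrouwerAdmissible (fun x ↦ x - c) V :=
    ⟨hV, hq.continuous.continuousOn, hzeros ▸ isCompact_singleton⟩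
  have hN : IsIsolatingNhd (fun x ↦ x - c) V (ball c ρ) :=
    ⟨isOpen_ball, isBounded_ball.isCompact_closure, closure_ball_subset_closedBall.trans hρV,
      hzeros.trans_subset (singleton_subset_iff.2 (mem_ball_self hρ))⟩
  obtain ⟨r, hr, hrρ⟩ := ((hadm.hasApproxDegree hN).and (Ioo_mem_nhdsGT hρ)).exists
  have hdet (x : ι → ℝ) : (fderiv ℝ (fun x ↦ x - c) x).det = 1 := by
    rw [fderiv_sub_const, fderiv_fun_id]
    exact LinearMap.det_id
  have hone : degreeIntegral r (fun x ↦ x - c) (ball c ρ) = 1 :=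
    degreeIntegral_eq_of_injOn hq hrρ.1 measurableSet_ball (sub_left_injective.injOn)
      (fun x _ ↦ by rw [hdet, abs_one, mul_one]) fun y hy ↦ ⟨y + c, by
        simpa using (mem_closedBall_zero_iff.1 hy).trans_lt hrρ.2, add_sub_cancel_right y c⟩
  exact_mod_cast (hr _ hq fun x _ ↦ by simpa using hrρ.1).symm.trans hone

theorem brouwerDegree_homotopy {H : ℝ × (ι → ℝ) → ι → ℝ} {Q : Set (ℝ × (ι → ℝ))} {a b : ℝ}
    (hab : a ≤ b) (hQ : IsOpen Q) (hH : ContinuousOn H Q)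
    (hzeros : IsCompact (Q ∩ {p | p.1 ∈ Icc a b ∧ H p = 0})) :
    brouwerDegree (fun y ↦ H (a, y)) {y | (a, y) ∈ Q} =
      brouwerDegree (fun y ↦ H (b, y)) {y | (b, y) ∈ Q} := by
  refine isPreconnected_Icc.constant (s := Icc a b)
    (f := fun t ↦ brouwerDegree (fun y ↦ H (t, y)) {y | (t, y) ∈ Q})
    (fun t ht ↦ ?_) (left_mem_Icc.2 hab) (right_mem_Icc.2 hab)
  have hslice {s : ℝ} (hs : s ∈ Icc a b) := BrouwerAdmissible.slice hQ hH hzeros hs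
  obtain ⟨N, hN⟩ := (hslice ht).exists_isIsolatingNhd
  obtain ⟨ε, hε, hstable⟩ := ((hslice ht).hasApproxDegree hN).exists_forall_norm_sub_lt hN.isOpen
    hN.isCompact_closure ((hslice ht).continuousOn.mono hN.closure_subset)
    fun _ ↦ hN.ne_zero_of_mem_frontier
  have hclose : ∀ᶠ s in 𝓝 t, ∀ y ∈ closure N, (s, y) ∈ Q ∧ ‖H (s, y) - H (t, y)‖ < ε := by
    refine hN.isCompact_closure.eventually_forall_of_forall_eventually fun y hy ↦ ?_
    have hyQ : (t, y) ∈ Q := hN.closure_subset hy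
    have hcont : ContinuousAt H (t, y) := hH.continuousAt (hQ.mem_nhds hyQ)
    have hlim : Tendsto (fun p : ℝ × (ι → ℝ) ↦ ‖H p - H (t, p.2)‖) (𝓝 (t, y)) (𝓝 0) := by
      have : Tendsto (fun p : ℝ × (ι → ℝ) ↦ H (t, p.2)) (𝓝 (t, y)) (𝓝 (H (t, y))) :=
        hcont.tendsto.comp (f := fun p : ℝ × (ι → ℝ) ↦ (t, p.2))
          (Continuous.tendsto' (by fun_prop) _ _ rfl)
      simpa using (hcont.tendsto.sub this).norm
    exact (hQ.eventually_mem hyQ).and (hlim.eventually (gt_mem_nhds hε))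
  have hfar : IsCompact (Prod.fst '' ((Q ∩ {p | p.1 ∈ Icc a b ∧ H p = 0}) ∩ Prod.snd ⁻¹' Nᶜ)) :=
    (hzeros.inter_right (hN.isOpen.isClosed_compl.preimage continuous_snd)).image continuous_fst
  have hiso : ∀ᶠ s in 𝓝[Icc a b] t, ∀ y, (s, y) ∈ Q → H (s, y) = 0 → y ∈ N := by
    have hmem := hfar.isClosed.isOpen_compl.mem_nhds (x := t) fun ⟨⟨_, y⟩, ⟨⟨hyQ, hy⟩, hyN⟩, rfl⟩ ↦
      hyN (hN.zeros_subset ⟨hyQ, hy.2⟩)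
    filter_upwards [mem_nhdsWithin_of_mem_nhds hmem, self_mem_nhdsWithin] with s hs hsI y hyQ hy
    by_contra hyN
    exact hs ⟨(s, y), ⟨⟨hyQ, hsI, hy⟩, hyN⟩, rfl⟩
  have hconst : (fun s ↦ brouwerDegree (fun y ↦ H (s, y)) {y | (s, y) ∈ Q}) =ᶠ[𝓝[Icc a b] t]
      fun _ ↦ brouwerDegree (fun y ↦ H (t, y)) {y | (t, y) ∈ Q} := by
    filter_upwards [mem_nhdsWithin_of_mem_nhds hclose, hiso, self_mem_nhdsWithin] with s hs hsN hsI
    exact (hslice hsI).brouwerDegree_eq ⟨hN.isOpen, hN.isCompact_closure, fun y hy ↦ (hs y hy).1,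
      fun y hy ↦ hsN y hy.1 hy.2⟩ (hstable _ fun y hy ↦ (hs y hy).2)
  exact continuousWithinAt_const.congr_of_eventuallyEq hconst rfl

end BrouwerDegree

section Homotopies

variable {ι : Type*} [Fintype ι]

theorem brouwerDegree_sub_const_eq_zero {f : (ι → ℝ) → ι → ℝ} {W K : Set (ι → ℝ)}
    (hW : IsOpen W) (hf : ContinuousOn f W) (hK : IsCompact K) (hKW : K ⊆ W)
    (hfK : ∀ y ∈ W \ K, f y = 0) {v : ι → ℝ} (hv : v ≠ 0) :
    brouwerDegree (fun y ↦ f y - v) W = 0 := by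
  obtain ⟨B, hB⟩ := hK.exists_bound_of_continuousOn (hf.mono hKW)
  obtain ⟨T, hBT, hT⟩ : ∃ T : ℝ, B < T * ‖v‖ ∧ 1 ≤ T :=
    (((tendsto_id.atTop_mul_const (norm_pos_iff.2 hv)).eventually_gt_atTop B).and
      (eventually_ge_atTop 1)).exists
  have hmem : ∀ t ∈ Icc 1 T, ∀ y ∈ W, f y - t • v = 0 → y ∈ K := fun t ht y hy h0 ↦ by
    by_contra hyK
    rw [hfK y ⟨hy, hyK⟩, zero_sub, neg_eq_zero, smul_eq_zero] at h0
    exact h0.elim (zero_lt_one.trans_le ht.1).ne' hv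
  have hne : ∀ y ∈ W, f y - T • v ≠ 0 := fun y hy h0 ↦ by
    have hyB := hB y (hmem T (right_mem_Icc.2 hT) y hy h0)
    rw [sub_eq_zero.1 h0, norm_smul, Real.norm_of_nonneg (by linarith)] at hyB
    linarith
  have hH : ContinuousOn (fun p : ℝ × (ι → ℝ) ↦ f p.2 - p.1 • v) (univ ×ˢ W) :=
    (hf.comp continuousOn_snd fun p hp ↦ hp.2).sub (by fun_prop)
  have hzeros : IsCompact
      ((univ ×ˢ W) ∩ {p : ℝ × (ι → ℝ) | p.1 ∈ Icc 1 T ∧ f p.2 - p.1 • v = 0}) := by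
    have hsub : Icc 1 T ×ˢ K ⊆ univ ×ˢ W := prod_mono (subset_univ _) hKW
    have hIK : IsCompact (Icc 1 T ×ˢ K) := isCompact_Icc.prod hK
    convert hIK.of_isClosed_subset ((hH.mono hsub).preimage_isClosed_of_isClosed hIK.isClosed
      (isClosed_singleton (x := 0))) inter_subset_left using 1
    ext p
    exact ⟨fun hp ↦ ⟨⟨hp.2.1, hmem _ hp.2.1 _ hp.1.2 hp.2.2⟩, hp.2.2⟩,
      fun hp ↦ ⟨hsub hp.1, hp.1.1, hp.2⟩⟩
  have hom := brouwerDegree_homotopy hT (isOpen_univ.prod hW) hH hzeros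
  simp only [mem_prod, mem_univ, true_and, ofPred_mem_eq, one_smul] at hom
  exact hom.trans (brouwerDegree_eq_zero hW (hf.sub continuousOn_const) hne)

theorem BrouwerAdmissible.comp_openPartialHomeomorph {X Y E : Type*} [TopologicalSpace X]
    [TopologicalSpace Y] [TopologicalSpace E] [Zero E] {F : Y → E} {P : Set Y}
    (h : BrouwerAdmissible F P) (e : OpenPartialHomeomorph X Y) (hP : P ⊆ e.target) :
    BrouwerAdmissible (F ∘ e) (e.source ∩ e ⁻¹' P) where
  isOpen := e.isOpen_inter_preimage h.isOpen
  continuousOn := h.continuousOn.comp (e.continuousOn.mono inter_subset_left) fun _ hx ↦ hx.2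
  isCompact_zeros := by
    have hsub : P ∩ F ⁻¹' {0} ⊆ e.target := inter_subset_left.trans hP
    convert h.isCompact_zeros.image_of_continuousOn (e.symm.continuousOn.mono hsub) using 1
    rw [e.symm_image_eq_source_inter_preimage hsub, preimage_inter, preimage_comp, inter_assoc]

open AffineMap

theorem lineMap_lineMap_inv {E : Type*} [AddCommGroup E] [Module ℝ E] {s : ℝ} (hs : s ≠ 0)
    (z x : E) : lineMap z (lineMap z x s) s⁻¹ = x := by
  rw [lineMap_lineMap_right, inv_mul_cancel₀ hs, lineMap_apply_one]

theorem brouwerDegree_comp_eq_brouwerDegree_lineMap {F : (ι → ℝ) → ι → ℝ} {P : Set (ι → ℝ)}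
    (hF : BrouwerAdmissible F P) (e : OpenPartialHomeomorph (ι → ℝ) (ι → ℝ)) {z : ι → ℝ}
    (hP : ∀ x ∈ P, segment ℝ z x ⊆ e.target) {a : ℝ} (ha : a ∈ Ioc 0 1) :
    brouwerDegree (F ∘ e) (e.source ∩ e ⁻¹' P) =
      brouwerDegree (fun y ↦ F (lineMap z (e y) a⁻¹))
        {y ∈ e.source | lineMap z (e y) a⁻¹ ∈ P} := by
  let κ : ℝ × (ι → ℝ) → ι → ℝ := fun p ↦ lineMap z (e p.2) p.1⁻¹
  have hκ : ContinuousOn κ (Ioi 0 ×ˢ e.source) :=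
    continuousOn_const.lineMap (e.continuousOn.comp continuousOn_snd fun p hp ↦ hp.2)
      (continuousOn_fst.inv₀ fun p hp ↦ (mem_Ioi.1 hp.1).ne')
  set Q : Set (ℝ × (ι → ℝ)) := (Ioi 0 ×ˢ e.source) ∩ κ ⁻¹' P
  have hQ : IsOpen Q := hκ.isOpen_inter_preimage (isOpen_Ioi.prod e.open_source) hF.isOpen
  have hpos {s : ℝ} (hs : s ∈ Icc a 1) : 0 < s := ha.1.trans_le hs.1
  have htarget {s : ℝ} (hs : s ∈ Icc a 1) {x : ι → ℝ} (hx : x ∈ P) : lineMap z x s ∈ e.target :=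
    hP x hx (lineMap_mem_segment ℝ z x ⟨(hpos hs).le, hs.2⟩)
  have hzeros : IsCompact (Q ∩ {p | p.1 ∈ Icc a 1 ∧ F (κ p) = 0}) := by
    have hcont : ContinuousOn (fun p : ℝ × (ι → ℝ) ↦ (p.1, e.symm (lineMap z p.2 p.1)))
        (Icc a 1 ×ˢ (P ∩ F ⁻¹' {0})) :=
      continuousOn_fst.prodMk (e.symm.continuousOn.comp
        (continuousOn_const.lineMap continuousOn_snd continuousOn_fst)
        fun p hp ↦ htarget hp.1 hp.2.1)
    convert (isCompact_Icc.prod hF.isCompact_zeros).image_of_continuousOn hcont using 1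
    ext ⟨s, y⟩
    constructor
    · rintro ⟨⟨⟨hs0, hy⟩, hyP⟩, hs, h0⟩
      refine ⟨(s, κ (s, y)), ⟨hs, hyP, h0⟩, Prod.ext rfl ?_⟩
      have hinv : lineMap z (κ (s, y)) s = e y := by
        simpa only [inv_inv] using lineMap_lineMap_inv (inv_ne_zero (mem_Ioi.1 hs0).ne') z (e y)
      exact (congrArg e.symm hinv).trans (e.left_inv hy)
    · rintro ⟨⟨t, x⟩, ⟨ht, hxP, h0⟩, heq⟩
      obtain ⟨rfl, rfl⟩ := Prod.mk.inj heq
      have hκx : κ (t, e.symm (lineMap z x t)) = x := by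
        simp only [κ, e.right_inv (htarget ht hxP), lineMap_lineMap_inv (hpos ht).ne']
      refine ⟨⟨⟨hpos ht, e.map_target (htarget ht hxP)⟩, ?_⟩, ht, ?_⟩
      · rwa [← hκx] at hxP
      · exact (congrArg F hκx).trans h0
  have hom := brouwerDegree_homotopy (H := F ∘ κ) ha.2 hQ
    (hF.continuousOn.comp (hκ.mono inter_subset_left) fun p hp ↦ hp.2) hzeros
  simp only [κ, Q, mem_inter_iff, mem_prod, mem_Ioi, mem_preimage, ha.1, zero_lt_one, true_and,
    Function.comp_apply, inv_one, lineMap_apply_one] at hom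
  exact hom.symm

-- Shrinking towards `z` pushes `P` into the ball on which `e` is the identity.
theorem brouwerDegree_comp_eq {F : (ι → ℝ) → ι → ℝ} {P : Set (ι → ℝ)}
    (hF : BrouwerAdmissible F P) (e : OpenPartialHomeomorph (ι → ℝ) (ι → ℝ)) {z : ι → ℝ}
    {ε R : ℝ} (hε : 0 < ε) (hsource : ball z ε ⊆ e.source) (hid : ∀ y ∈ ball z ε, e y = y)
    (htarget : ball z R ⊆ e.target) (hP : P ⊆ ball z R) :
    brouwerDegree (F ∘ e) (e.source ∩ e ⁻¹' P) = brouwerDegree F P := by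
  rcases P.eq_empty_or_nonempty with rfl | ⟨x₀, hx₀⟩
  · simp [brouwerDegree_eq_zero]
  have hR : 0 < R := pos_of_mem_ball (hP hx₀)
  obtain ⟨a, ha0, ha⟩ : ∃ a, 0 < a ∧ a < min 1 (ε / R) := exists_between (by positivity)
  have haR : a * R < ε := (lt_div_iff₀ hR).1 (ha.trans_le (min_le_right _ _))
  have ha1 : a ∈ Ioc 0 1 := ⟨ha0, (ha.trans_le (min_le_left _ _)).le⟩
  have hseg : ∀ x ∈ P, segment ℝ z x ⊆ ball z R := fun x hx ↦
    (convex_ball z R).segment_subset (mem_ball_self hR) (hP hx)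
  have hsmall : ∀ y, lineMap z y a⁻¹ ∈ P → y ∈ ball z ε := fun y hy ↦ by
    have := hP hy
    rw [mem_ball, dist_lineMap_left, norm_inv, Real.norm_of_nonneg ha0.le, inv_mul_lt_iff₀ ha0,
      dist_comm] at this
    exact this.trans haR
  have hfix : ∀ y ∈ e.source, e y ∈ ball z ε → e y = y := fun y hy hey ↦
    e.injOn (hsource hey) hy (hid _ hey)
  have hset : {y ∈ e.source | lineMap z (e y) a⁻¹ ∈ P} = {y | lineMap z y a⁻¹ ∈ P} := by
    ext y
    constructor
    · rintro ⟨hy, hyP⟩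
      rwa [hfix y hy (hsmall _ hyP)] at hyP
    · intro hyP
      have hy := hsmall y hyP
      exact ⟨hsource hy, by rwa [hid y hy]⟩
  have hrefl : brouwerDegree F P =
      brouwerDegree (fun y ↦ F (lineMap z y a⁻¹)) {y | lineMap z y a⁻¹ ∈ P} := by
    simpa [inter_eq_self_of_subset_right] using brouwerDegree_comp_eq_brouwerDegree_lineMap hF
      (OpenPartialHomeomorph.refl (ι → ℝ)) (z := z) (by simp) ha1
  rw [hrefl, brouwerDegree_comp_eq_brouwerDegree_lineMap hF e
    (fun x hx ↦ (hseg x hx).trans htarget) ha1, hset]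
  exact brouwerDegree_congr fun y hy ↦ by rw [hid y (hsmall y hy)]

end Homotopies

section PeriodicMaps

open Function

/-- The map `h` restricts to a homeomorphism of the open set `W` whose `p`-th iterate is the
identity of `W`. -/
structure PeriodicOn {X : Type*} [TopologicalSpace X] (h : X → X) (p : ℕ) (W : Set X) :
    Prop where
  isOpen : IsOpen W
  continuousOn : ContinuousOn h W
  mapsTo : MapsTo h W W
  pos : 0 < p
  isPeriodicPt : ∀ y ∈ W, IsPeriodicPt h p y

namespace PeriodicOn

variable {X E : Type*} [TopologicalSpace X] {h : X → X} {p : ℕ} {W : Set X}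

theorem continuousOn_iterate (S : PeriodicOn h p W) : ∀ i, ContinuousOn h^[i] W
  | 0 => continuousOn_id
  | i + 1 => (S.continuousOn_iterate i).comp S.continuousOn S.mapsTo

theorem iterate (S : PeriodicOn h p W) (i : ℕ) : PeriodicOn h^[i] p W where
  isOpen := S.isOpen
  continuousOn := S.continuousOn_iterate i
  mapsTo := S.mapsTo.iterate i
  pos := S.pos
  isPeriodicPt y hy := (S.isPeriodicPt y hy).iterate i

theorem iterate_of_mul_eq {k m : ℕ} (S : PeriodicOn h p W) (hkm : k * m = p) :
    PeriodicOn h^[k] m W where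
  isOpen := S.isOpen
  continuousOn := S.continuousOn_iterate k
  mapsTo := S.mapsTo.iterate k
  pos := Nat.pos_of_mul_pos_left (hkm ▸ S.pos)
  isPeriodicPt y hy := by
    rw [IsPeriodicPt, ← iterate_mul, hkm]
    exact S.isPeriodicPt y hy

theorem iterate_sub_iterate (S : PeriodicOn h p W) {i : ℕ} (hi : i ≤ p) {y : X} (hy : y ∈ W) :
    h^[p - i] (h^[i] y) = y := by
  rw [← iterate_add_apply, Nat.sub_add_cancel hi, S.isPeriodicPt y hy]

theorem iterate_iterate_sub (S : PeriodicOn h p W) {i : ℕ} (hi : i ≤ p) {y : X} (hy : y ∈ W) :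
    h^[i] (h^[p - i] y) = y := by
  rw [← iterate_add_apply, Nat.add_sub_cancel' hi, S.isPeriodicPt y hy]

/-- A periodic map of `W` as a partial homeomorphism with source and target `W`. -/
def toOpenPartialHomeomorph (S : PeriodicOn h p W) : OpenPartialHomeomorph X X where
  toFun := h
  invFun := h^[p - 1]
  source := W
  target := W
  map_source' := S.mapsTo
  map_target' := S.mapsTo.iterate _
  left_inv' _ hy := S.iterate_sub_iterate S.pos hy
  right_inv' _ hy := S.iterate_iterate_sub S.pos hy
  open_source := S.isOpen
  open_target := S.isOpen
  continuousOn_toFun := S.continuousOn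
  continuousOn_invFun := S.continuousOn_iterate _

theorem exists_lt_iterate_eq (S : PeriodicOn h p W) {y : X} (hy : y ∈ W) (i : ℕ) :
    ∃ j < p, h^[j] y = h^[i] y :=
  ⟨i % p, Nat.mod_lt _ S.pos, (S.isPeriodicPt y hy).iterate_mod_apply i⟩

theorem mem_of_iterate_mem (S : PeriodicOn h p W) {Z : Set X} (hZ : MapsTo h Z Z) {y : X}
    (hy : y ∈ W) {i : ℕ} (hi : h^[i] y ∈ Z) : y ∈ Z := by
  obtain ⟨j, hj, hji⟩ := S.exists_lt_iterate_eq hy i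
  rw [← S.iterate_sub_iterate hj.le hy, hji]
  exact hZ.iterate _ hi

theorem isOpen_forall_iterate_mem (S : PeriodicOn h p W) {U : Set X} (hU : IsOpen U) :
    IsOpen {y ∈ W | ∀ i, h^[i] y ∈ U} := by
  convert S.isOpen.inter (isOpen_biInter_finset (s := Finset.range p)
    fun i _ ↦ (S.continuousOn_iterate i).isOpen_inter_preimage S.isOpen hU) using 1
  ext y
  simp only [mem_ofPred_eq, mem_inter_iff, mem_iInter, Finset.mem_range, mem_preimage]
  refine and_congr_right fun hy ↦ ⟨fun hU i _ ↦ ⟨hy, hU i⟩, fun hU i ↦ ?_⟩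
  obtain ⟨j, hj, hji⟩ := S.exists_lt_iterate_eq hy i
  exact hji ▸ (hU j hj).2

theorem forall_iterate_mem (S : PeriodicOn h p W) {U : Set X} (hU : IsOpen U) :
    PeriodicOn h p {y ∈ W | ∀ i, h^[i] y ∈ U} where
  isOpen := S.isOpen_forall_iterate_mem hU
  continuousOn := S.continuousOn.mono (sep_subset _ _)
  mapsTo _ hy := ⟨S.mapsTo hy.1, fun i ↦ hy.2 (i + 1)⟩
  pos := S.pos
  isPeriodicPt y hy := S.isPeriodicPt y hy.1

theorem isOpen_exists_iterate_mem (S : PeriodicOn h p W) {U : Set X} (hU : IsOpen U) :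
    IsOpen {y ∈ W | ∃ i, h^[i] y ∈ U} := by
  convert isOpen_iUnion fun i ↦ (S.continuousOn_iterate i).isOpen_inter_preimage S.isOpen hU
    using 1
  ext y
  simp only [mem_ofPred_eq, mem_iUnion, mem_inter_iff, mem_preimage, exists_and_left]

theorem isCompact_exists_iterate_mem (S : PeriodicOn h p W) {C : Set X} (hC : IsCompact C)
    (hCW : C ⊆ W) : IsCompact {y ∈ W | ∃ i, h^[i] y ∈ C} := by
  convert (Finset.range p).isCompact_biUnion fun i _ ↦
    hC.image_of_continuousOn ((S.continuousOn_iterate (p - i)).mono hCW) using 1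
  ext y
  simp only [mem_ofPred_eq, mem_iUnion, Finset.mem_range, mem_image, exists_prop]
  constructor
  · rintro ⟨hy, i, hi⟩
    obtain ⟨j, hj, hji⟩ := S.exists_lt_iterate_eq hy i
    exact ⟨j, hj, h^[j] y, hji ▸ hi, S.iterate_sub_iterate hj.le hy⟩
  · rintro ⟨i, hi, x, hx, rfl⟩
    exact ⟨S.mapsTo.iterate _ (hCW hx), i, by rwa [S.iterate_iterate_sub hi.le (hCW hx)]⟩

theorem isFixedPt_of_isFixedPt_iterate (S : PeriodicOn h p W) {y : X} (hy : y ∈ W) {i : ℕ}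
    (hi : IsFixedPt h (h^[i] y)) : IsFixedPt h y := by
  obtain ⟨j, hj, hji⟩ := S.exists_lt_iterate_eq hy i
  have hfix : h^[i] y = y := by
    rw [← hji, ← iterate_fixed (hji ▸ hi : IsFixedPt h (h^[j] y)) (p - j),
      S.iterate_sub_iterate hj.le hy]
  rwa [hfix] at hi

theorem isFixedPt_of_prime (S : PeriodicOn h p W) (hp : p.Prime) {y : X} (hy : y ∈ W) {j : ℕ}
    (hj : 0 < j) (hjp : j < p) (hfix : IsPeriodicPt h j y) : IsFixedPt h y := by
  have := hfix.gcd (S.isPeriodicPt y hy)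
  rwa [(Nat.coprime_of_lt_prime hj.ne' hjp hp).symm.gcd_eq_one] at this

theorem comp_iterate_eqOn (S : PeriodicOn h p W) {f : X → E} (hf : EqOn (f ∘ h) f W) (i : ℕ) :
    EqOn (f ∘ h^[i]) f W := by
  induction i with
  | zero => exact fun _ _ ↦ rfl
  | succ i ih => exact fun y hy ↦ (ih (S.mapsTo hy)).trans (hf hy)

theorem continuousOn_birkhoffSum (S : PeriodicOn h p W) [AddCommMonoid E] [TopologicalSpace E]
    [ContinuousAdd E] {φ : X → E} (hφ : ContinuousOn φ W) (m : ℕ) :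
    ContinuousOn (birkhoffSum h φ m) W :=
  continuousOn_finsetSum _ fun i _ ↦
    hφ.comp (S.continuousOn_iterate i) (S.mapsTo.iterate i)

theorem birkhoffSum_comp_eqOn (S : PeriodicOn h p W) [AddCommGroup E] (φ : X → E) :
    EqOn (birkhoffSum h φ p ∘ h) (birkhoffSum h φ p) W := fun y hy ↦ by
  rw [← sub_eq_zero, comp_apply, birkhoffSum_apply_sub_birkhoffSum, S.isPeriodicPt y hy, sub_self]

theorem continuousOn_birkhoffAverage (S : PeriodicOn h p W) [AddCommGroup E] [Module ℝ E]
    [TopologicalSpace E] [ContinuousAdd E] [ContinuousConstSMul ℝ E] {φ : X → E}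
    (hφ : ContinuousOn φ W) (m : ℕ) : ContinuousOn (birkhoffAverage ℝ h φ m) W :=
  (S.continuousOn_birkhoffSum hφ m).const_smul (m : ℝ)⁻¹

theorem birkhoffAverage_comp_eqOn (S : PeriodicOn h p W) [AddCommGroup E] [Module ℝ E]
    (φ : X → E) : EqOn (birkhoffAverage ℝ h φ p ∘ h) (birkhoffAverage ℝ h φ p) W :=
  fun _ hy ↦ congrArg ((p : ℝ)⁻¹ • ·) (S.birkhoffSum_comp_eqOn φ hy)

end PeriodicOn

/-- A pair `(c, ρ)` for which the closed ball of radius `2 * ρ` around `c` lies in `U` and is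
disjoint from its translates by `h, …, h^[p - 1]`. -/
structure IsFreeBall {E : Type*} [PseudoMetricSpace E] (h : E → E) (p : ℕ) (U : Set E)
    (b : E × ℝ) : Prop where
  pos : 0 < b.2
  subset : closedBall b.1 (2 * b.2) ⊆ U
  iterate_notMem : ∀ x ∈ closedBall b.1 (2 * b.2), ∀ j, 0 < j → j < p →
    h^[j] x ∉ closedBall b.1 (2 * b.2)

theorem IsFreeBall.closedBall_subset {E : Type*} [PseudoMetricSpace E] {h : E → E} {p : ℕ}
    {U : Set E} {b : E × ℝ} (hb : IsFreeBall h p U b) :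
    closedBall b.1 b.2 ⊆ closedBall b.1 (2 * b.2) :=
  closedBall_subset_closedBall (by linarith [hb.pos])

theorem PeriodicOn.exists_isFreeBall {E : Type*} [MetricSpace E] {h : E → E} {p : ℕ}
    {U W : Set E} (S : PeriodicOn h p W) (hp : p.Prime) (hU : IsOpen U) (hUW : U ⊆ W) {x : E}
    (hx : x ∈ U) (hfix : ¬ IsFixedPt h x) : ∃ ρ, IsFreeBall h p U (x, ρ) := by
  have hdisj : ∀ j ∈ Finset.Ioo 0 p,
      ∀ᶠ ρ in 𝓝[>] (0 : ℝ), ∀ y ∈ closedBall x (2 * ρ), h^[j] y ∉ closedBall x (2 * ρ) := by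
    intro j hj
    obtain ⟨hj, hjp⟩ := Finset.mem_Ioo.1 hj
    have hne : h^[j] x ≠ x := fun h0 ↦ hfix (S.isFixedPt_of_prime hp (hUW hx) hj hjp h0)
    obtain ⟨A, B, hA, hB, hxA, hxB, hAB⟩ := t2_separation hne
    have hmem : B ∩ h^[j] ⁻¹' A ∈ 𝓝 x := inter_mem (hB.mem_nhds hxB)
      (((S.continuousOn_iterate j).continuousAt (S.isOpen.mem_nhds (hUW hx))).preimage_mem_nhds
        (hA.mem_nhds hxA))
    obtain ⟨δ, hδ, hsub⟩ := nhds_basis_closedBall.mem_iff.1 hmem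
    filter_upwards [Ioc_mem_nhdsGT (half_pos hδ)] with ρ hρ y hy hjy
    have hle : closedBall x (2 * ρ) ⊆ closedBall x δ :=
      closedBall_subset_closedBall (by linarith [hρ.2])
    exact disjoint_left.1 hAB (hsub (hle hy)).2 (hsub (hle hjy)).1
  obtain ⟨δ, hδ, hsub⟩ := nhds_basis_closedBall.mem_iff.1 (hU.mem_nhds hx)
  obtain ⟨ρ, hρ, hρδ⟩ := (((Finset.Ioo 0 p).eventually_all.2 hdisj).and
    (Ioc_mem_nhdsGT (half_pos hδ))).exists
  exact ⟨ρ, hρδ.1, (closedBall_subset_closedBall (by linarith [hρδ.2])).trans hsub,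
    fun y hy j hj hjp ↦ hρ j (Finset.mem_Ioo.2 ⟨hj, hjp⟩) y hy⟩

end PeriodicMaps

section Divisibility

open Function

variable {ι : Type*} [Fintype ι] {h : (ι → ℝ) → ι → ℝ} {p : ℕ} {W : Set (ι → ℝ)}

theorem exists_add_ne_zero_on_sphere {f : (ι → ℝ) → ι → ℝ} (hf : ContinuousOn f W) {c : ι → ℝ}
    {ρ r : ℝ} (hρ : 0 < ρ) (hsub : closedBall c (2 * ρ) ⊆ W) (hr : 0 < r) :
    ∃ φ : (ι → ℝ) → ι → ℝ, ContinuousOn φ W ∧ (∀ x ∉ closedBall c (2 * ρ), φ x = 0) ∧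
      (∀ x, ‖φ x‖ ≤ r) ∧ ∀ x ∈ sphere c ρ, f x + φ x ≠ 0 := by
  obtain ⟨χ, hχ, -, hχs, hχ1, hχI⟩ := exists_contDiff_tsupport_subset_eventually_eq_one
    (isCompact_sphere c ρ) isOpen_ball
    (sphere_subset_closedBall.trans (closedBall_subset_ball (by linarith : ρ < 2 * ρ)))
  have hχ0 : ∀ x ∉ closedBall c (2 * ρ), χ x = 0 := fun x hx ↦
    image_eq_zero_of_notMem_tsupport fun hx' ↦ hx (ball_subset_closedBall (hχs hx'))
  obtain ⟨q, hq, hqf⟩ := exists_contDiff_forall_norm_sub_lt (isCompact_closedBall c (2 * ρ))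
    (hf.mono hsub) (half_pos hr)
  have hnull : volume (q '' sphere c ρ) = 0 :=
    addHaar_image_eq_zero_of_differentiableOn_of_addHaar_eq_zero volume
      (hq.differentiable one_ne_zero).differentiableOn
        (Measure.addHaar_sphere_of_ne_zero _ _ hρ.ne')
  obtain ⟨w, hw, hwq⟩ : ∃ w ∈ ball (0 : ι → ℝ) (r / 2), w ∉ q '' sphere c ρ := by
    by_contra! hsub
    exact (measure_ball_pos volume _ (half_pos hr)).ne' (measure_mono_null hsub hnull)
  refine ⟨fun x ↦ χ x • (q x - w - f x),
    hχ.continuous.continuousOn.smul ((hq.continuous.continuousOn.sub continuousOn_const).sub hf),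
    fun x hx ↦ by simp only [hχ0 x hx, zero_smul], fun x ↦ ?_, fun x hx h0 ↦ ?_⟩
  · by_cases hx : x ∈ closedBall c (2 * ρ)
    · calc ‖χ x • (q x - w - f x)‖ = χ x * ‖q x - w - f x‖ := by
            rw [norm_smul, Real.norm_of_nonneg (hχI x).1]
        _ ≤ ‖q x - f x - w‖ := by
            rw [sub_right_comm]; exact mul_le_of_le_one_left (norm_nonneg _) (hχI x).2
        _ ≤ ‖q x - f x‖ + ‖w‖ := norm_sub_le _ _
        _ ≤ r / 2 + r / 2 := add_le_add (hqf x hx).le (mem_ball_zero_iff.1 hw).le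
        _ = r := add_halves r
    · simpa only [hχ0 x hx, zero_smul, norm_zero] using hr.le
  · simp only [(hχ1 x hx).self_of_nhds, one_smul, add_sub_cancel, sub_eq_zero] at h0
    exact hwq ⟨x, hx, h0⟩

theorem IsFreeBall.exists_perturbation {b : (ι → ℝ) × ℝ} (hb : IsFreeBall h p W b)
    (S : PeriodicOn h p W) {f : (ι → ℝ) → ι → ℝ} (hf : ContinuousOn f W)
    (hinv : EqOn (f ∘ h) f W) {r : ℝ} (hr : 0 < r) :
    ∃ f' : (ι → ℝ) → ι → ℝ, ContinuousOn f' W ∧ EqOn (f' ∘ h) f' W ∧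
      (∀ y, ‖f' y - f y‖ < r) ∧ (∀ y ∈ sphere b.1 b.2, f' y ≠ 0) ∧
      ∀ y, (∀ i, h^[i] y ∉ closedBall b.1 (2 * b.2)) → f' y = f y := by
  have hp : (0 : ℝ) < p := Nat.cast_pos.2 S.pos
  obtain ⟨φ, hφ, hφ0, hφr, hφs⟩ :=
    exists_add_ne_zero_on_sphere hf hb.pos hb.subset (r := r / (2 * p)) (by positivity)
  refine ⟨f + birkhoffSum h φ p, hf.add (S.continuousOn_birkhoffSum hφ p), fun y hy ↦ ?_,
    fun y ↦ ?_, fun y hy ↦ ?_, fun y hy ↦ ?_⟩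
  · exact congrArg₂ (· + ·) (hinv hy) (S.birkhoffSum_comp_eqOn φ hy)
  · calc ‖(f + birkhoffSum h φ p) y - f y‖ = ‖∑ i ∈ Finset.range p, φ (h^[i] y)‖ := by
          rw [Pi.add_apply, add_sub_cancel_left, birkhoffSum]
      _ ≤ ∑ i ∈ Finset.range p, r / (2 * p) := norm_sum_le_of_le _ fun i _ ↦ hφr _
      _ = r / 2 := by rw [Finset.sum_const, Finset.card_range, nsmul_eq_mul]; field_simp
      _ < r := half_lt_self hr
  · have hsum : birkhoffSum h φ p y = φ y :=
      Finset.sum_eq_single_of_mem 0 (Finset.mem_range.2 S.pos) fun i hi hi0 ↦ hφ0 _ <|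
        hb.iterate_notMem y (hb.closedBall_subset (sphere_subset_closedBall hy)) i
          (Nat.pos_of_ne_zero hi0) (Finset.mem_range.1 hi)
    rw [Pi.add_apply, hsum]
    exact hφs y hy
  · rw [Pi.add_apply, add_eq_left]
    exact Finset.sum_eq_zero fun i _ ↦ hφ0 _ (hy i)

theorem PeriodicOn.exists_perturbation (S : PeriodicOn h p W) (L : Finset ((ι → ℝ) × ℝ))
    (hL : ∀ b ∈ L, IsFreeBall h p W b) {f : (ι → ℝ) → ι → ℝ} (hf : ContinuousOn f W)
    (hinv : EqOn (f ∘ h) f W) {r : ℝ} (hr : 0 < r) :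
    ∃ f' : (ι → ℝ) → ι → ℝ, ContinuousOn f' W ∧ EqOn (f' ∘ h) f' W ∧
      (∀ y, ‖f' y - f y‖ < r) ∧ (∀ b ∈ L, ∀ y ∈ sphere b.1 b.2, f' y ≠ 0) ∧
      ∀ y, (∀ b ∈ L, ∀ i, h^[i] y ∉ closedBall b.1 (2 * b.2)) → f' y = f y := by
  classical
  induction L using Finset.induction_on generalizing r with
  | empty => exact ⟨f, hf, hinv, fun y ↦ by rwa [sub_self, norm_zero], by simp, fun _ _ ↦ rfl⟩
  | insert b L _ ih =>
    rw [Finset.forall_mem_insert] at hL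
    obtain ⟨f₁, hf₁, hinv₁, hr₁, hs₁, heq₁⟩ := ih hL.2 (half_pos hr)
    have hspheres : IsCompact (⋃ b ∈ L, sphere b.1 b.2) :=
      L.isCompact_biUnion fun b _ ↦ isCompact_sphere b.1 b.2
    have hspheresW : (⋃ b ∈ L, sphere b.1 b.2) ⊆ W := iUnion₂_subset fun b hb ↦
      sphere_subset_closedBall.trans ((hL.2 b hb).closedBall_subset.trans (hL.2 b hb).subset)
    obtain ⟨δ, hδ, hδf⟩ := hspheres.exists_forall_le' (hf₁.mono hspheresW).norm
      fun y hy ↦ norm_pos_iff.2 (by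
        obtain ⟨b, hb, hy⟩ := mem_iUnion₂.1 hy
        exact hs₁ b hb y hy)
    obtain ⟨f', hf', hinv', hr', hs', heq'⟩ :=
      hL.1.exists_perturbation S hf₁ hinv₁ (lt_min (half_pos hr) hδ)
    refine ⟨f', hf', hinv', fun y ↦ ?_, Finset.forall_mem_insert _ _ _ |>.2 ⟨hs', ?_⟩,
      fun y hy ↦ ?_⟩
    · calc ‖f' y - f y‖ ≤ ‖f' y - f₁ y‖ + ‖f₁ y - f y‖ := norm_sub_le_norm_sub_add_norm_sub _ _ _
        _ < r / 2 + r / 2 := add_lt_add ((hr' y).trans_le (min_le_left _ _)) (hr₁ y)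
        _ = r := add_halves r
    · intro b hb y hy h0
      have hyL : y ∈ ⋃ b ∈ L, sphere b.1 b.2 := mem_iUnion₂.2 ⟨b, hb, hy⟩
      have hlt := (hr' y).trans_le (min_le_right _ _)
      rw [h0, zero_sub, norm_neg] at hlt
      exact (hδf y hyL).not_gt hlt
    · rw [Finset.forall_mem_insert] at hy
      rw [heq' y hy.1, heq₁ y hy.2]

variable {z : ι → ℝ} {ε R : ℝ}

theorem PeriodicOn.brouwerDegree_exists_iterate_mem (S : PeriodicOn h p W) (hε : 0 < ε)
    (hsource : ball z ε ⊆ W) (hid : ∀ y ∈ ball z ε, h y = y) (htarget : ball z R ⊆ W)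
    {f : (ι → ℝ) → ι → ℝ} (hinv : EqOn (f ∘ h) f W) {P : Set (ι → ℝ)} (hP : P ⊆ ball z R)
    (hfree : ∀ x ∈ P, ∀ j, 0 < j → j < p → h^[j] x ∉ P) (hf : BrouwerAdmissible f P) :
    brouwerDegree f {y ∈ W | ∃ i, h^[i] y ∈ P} = p * brouwerDegree f P := by
  have hiter : ∀ i, EqOn (f ∘ h^[i]) f (W ∩ h^[i] ⁻¹' P) := fun i ↦
    (S.comp_iterate_eqOn hinv i).mono inter_subset_left
  have hdeg : ∀ i, brouwerDegree f (W ∩ h^[i] ⁻¹' P) = brouwerDegree f P := fun i ↦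
    (brouwerDegree_congr (hiter i)).symm.trans <|
      brouwerDegree_comp_eq hf (S.iterate i).toOpenPartialHomeomorph hε hsource
        (fun y hy ↦ iterate_fixed (hid y hy) i) htarget hP
  have hadm : ∀ i ∈ Finset.range p, BrouwerAdmissible f (W ∩ h^[i] ⁻¹' P) := fun i _ ↦
    (hf.comp_openPartialHomeomorph (S.iterate i).toOpenPartialHomeomorph
      (hP.trans htarget)).congr (hiter i)
  have hdisj : (Finset.range p : Set ℕ).PairwiseDisjoint fun i ↦ W ∩ h^[i] ⁻¹' P := by
    have key : ∀ i j, i < j → j < p → Disjoint (W ∩ h^[i] ⁻¹' P) (W ∩ h^[j] ⁻¹' P) := by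
      refine fun i j hij hj ↦ disjoint_left.2 fun y hi hj' ↦
        hfree _ hi.2 (j - i) (Nat.sub_pos_of_lt hij) ((Nat.sub_le _ _).trans_lt hj) ?_
      rw [← iterate_add_apply, Nat.sub_add_cancel hij.le]
      exact hj'.2
    rintro i hi j hj hij
    rw [Finset.mem_coe, Finset.mem_range] at hi hj
    exact hij.lt_or_gt.elim (key i j · hj) fun hji ↦ (key j i hji hi).symm
  have hunion : {y ∈ W | ∃ i, h^[i] y ∈ P} = ⋃ i ∈ Finset.range p, W ∩ h^[i] ⁻¹' P := by
    ext y
    simp only [mem_ofPred_eq, mem_iUnion, Finset.mem_range, mem_inter_iff, mem_preimage,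
      exists_prop]
    constructor
    · rintro ⟨hy, i, hi⟩
      obtain ⟨j, hj, hji⟩ := S.exists_lt_iterate_eq hy i
      exact ⟨j, hj, hy, hji ▸ hi⟩
    · rintro ⟨i, -, hy, hi⟩
      exact ⟨hy, i, hi⟩
  rw [hunion, (brouwerDegree_biUnion_finset _ hadm hdisj).2, Finset.sum_congr rfl fun i _ ↦ hdeg i,
    Finset.sum_const, Finset.card_range, nsmul_eq_mul]

theorem PeriodicOn.brouwerDegree_eq_add_of_isFreeBall (S : PeriodicOn h p W) (hε : 0 < ε)
    (hsource : ball z ε ⊆ W) (hid : ∀ y ∈ ball z ε, h y = y) (htarget : ball z R ⊆ W)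
    {f : (ι → ℝ) → ι → ℝ} (hinv : EqOn (f ∘ h) f W) {b : (ι → ℝ) × ℝ}
    (hb : IsFreeBall h p (ball z R) b) (hs : ∀ y ∈ sphere b.1 b.2, f y ≠ 0) {Y : Set (ι → ℝ)}
    (hYW : Y ⊆ W) (hY : MapsTo h Y Y) (hf : BrouwerAdmissible f Y) :
    BrouwerAdmissible f (Y ∩ {y ∈ W | ∀ i, h^[i] y ∈ (closedBall b.1 b.2)ᶜ}) ∧
      brouwerDegree f Y = brouwerDegree f (Y ∩ {y ∈ W | ∀ i, h^[i] y ∈ (closedBall b.1 b.2)ᶜ}) +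
        p * brouwerDegree f (Y ∩ ball b.1 b.2) := by
  have hball : ball b.1 b.2 ⊆ closedBall b.1 (2 * b.2) :=
    ball_subset_closedBall.trans hb.closedBall_subset
  have mem_ball_of_zero : ∀ y ∈ closedBall b.1 b.2, f y = 0 → y ∈ ball b.1 b.2 :=
    fun y hy h0 ↦ (ball_union_sphere (x := b.1) ▸ hy).resolve_right fun hys ↦ hs y hys h0
  set P := Y ∩ ball b.1 b.2
  set V₁ := {y ∈ W | ∃ i, h^[i] y ∈ P}
  set V₂ := Y ∩ {y ∈ W | ∀ i, h^[i] y ∈ (closedBall b.1 b.2)ᶜ}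
  have hPo : IsOpen P := hf.isOpen.inter isOpen_ball
  have hV₁ : IsOpen V₁ := S.isOpen_exists_iterate_mem hPo
  have hV₂ : IsOpen V₂ :=
    hf.isOpen.inter (S.isOpen_forall_iterate_mem isClosed_closedBall.isOpen_compl)
  have hV₁Y : V₁ ⊆ Y := fun y ⟨hy, i, hi⟩ ↦ S.mem_of_iterate_mem hY hy hi.1
  have hdisj : Disjoint V₂ V₁ := disjoint_left.2 fun y hy₂ ⟨_, i, hi⟩ ↦
    hy₂.2.2 i (ball_subset_closedBall hi.2)
  have hzeros : Y ∩ f ⁻¹' {0} ⊆ V₂ ∪ V₁ := by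
    rintro y ⟨hy, h0⟩
    by_cases hcl : ∀ i, h^[i] y ∈ (closedBall b.1 b.2)ᶜ
    · exact Or.inl ⟨hy, hYW hy, hcl⟩
    · push Not at hcl
      obtain ⟨i, hi⟩ := hcl
      exact Or.inr ⟨hYW hy, i, hY.iterate i hy, mem_ball_of_zero _ (notMem_compl_iff.1 hi)
        ((S.comp_iterate_eqOn hinv i (hYW hy)).trans h0)⟩
  have hfP : BrouwerAdmissible f P :=
    hf.of_disjoint hPo (hf.isOpen.sdiff isClosed_closedBall) inter_subset_left
      (disjoint_left.2 fun y hy hy' ↦ hy'.2 (ball_subset_closedBall hy.2)) fun y hy ↦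
        (em (y ∈ closedBall b.1 b.2)).imp (fun hcl ↦ ⟨hy.1, mem_ball_of_zero y hcl hy.2⟩)
          fun hcl ↦ ⟨hy.1, hcl⟩
  refine ⟨hf.of_disjoint hV₂ hV₁ inter_subset_left hdisj hzeros, ?_⟩
  rw [hf.brouwerDegree_eq_add hV₂ hV₁ inter_subset_left hV₁Y hdisj hzeros,
    S.brouwerDegree_exists_iterate_mem hε hsource hid htarget hinv
      (inter_subset_right.trans (hball.trans hb.subset))
      (fun x hx j hj hjp hjx ↦ hb.iterate_notMem x (hball hx.2) j hj hjp (hball hjx.2)) hfP]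

theorem PeriodicOn.dvd_brouwerDegree (S : PeriodicOn h p W) (hε : 0 < ε)
    (hsource : ball z ε ⊆ W) (hid : ∀ y ∈ ball z ε, h y = y) (htarget : ball z R ⊆ W)
    {f : (ι → ℝ) → ι → ℝ} (hinv : EqOn (f ∘ h) f W) (L : Finset ((ι → ℝ) × ℝ))
    (hL : ∀ b ∈ L, IsFreeBall h p (ball z R) b) (hs : ∀ b ∈ L, ∀ y ∈ sphere b.1 b.2, f y ≠ 0)
    {Y : Set (ι → ℝ)} (hYW : Y ⊆ W) (hY : MapsTo h Y Y) (hf : BrouwerAdmissible f Y)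
    (hz : ∀ y ∈ Y, f y = 0 → ∃ b ∈ L, ∃ i, h^[i] y ∈ ball b.1 b.2) :
    (p : ℤ) ∣ brouwerDegree f Y := by
  classical
  induction L using Finset.induction_on generalizing Y with
  | empty =>
    rw [brouwerDegree_eq_zero hf.isOpen hf.continuousOn fun y hy h0 ↦ by
      obtain ⟨b, hb, -⟩ := hz y hy h0
      exact Finset.notMem_empty b hb]
    exact dvd_zero _
  | insert b L _ ih =>
    rw [Finset.forall_mem_insert] at hL hs
    obtain ⟨hf₂, hdeg⟩ := S.brouwerDegree_eq_add_of_isFreeBall hε hsource hid htarget hinv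
      hL.1 hs.1 hYW hY hf
    rw [hdeg]
    refine dvd_add (ih hL.2 hs.2 (inter_subset_left.trans hYW) (fun y hy ↦ ?_) hf₂
      fun y hy h0 ↦ ?_) (dvd_mul_right _ _)
    · exact ⟨hY hy.1, S.mapsTo hy.2.1, fun i ↦ hy.2.2 (i + 1)⟩
    · obtain ⟨b', hb', i, hi⟩ := hz y hy.1 h0
      obtain rfl | hb' := Finset.mem_insert.1 hb'
      · exact absurd (ball_subset_closedBall hi) (hy.2.2 i)
      · exact ⟨b', hb', i, hi⟩

end Divisibility

section TentMap

variable {E : Type*} [NormedAddCommGroup E] [NormedSpace ℝ E] {z y : E} {ε R : ℝ}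

/-- The translation `y ↦ y - z` on `closedBall z ε`, extended along the rays from `z` so that the
norm decreases linearly from `ε` to `0` as the radius grows from `ε` to `R`. -/
noncomputable def tentMap (z : E) (ε R : ℝ) (y : E) : E :=
  (ε / (R - ε) * max 0 (R / max ‖y - z‖ ε - 1)) • (y - z)

theorem continuous_tentMap (hε : 0 < ε) : Continuous (tentMap z ε R) := by
  have hne : ∀ y : E, max ‖y - z‖ ε ≠ 0 := fun y ↦ (lt_max_of_lt_right hε).ne'
  unfold tentMap
  fun_prop (disch := exact hne _)

theorem tentMap_of_mem_closedBall (hε : 0 < ε) (hεR : ε < R) (hy : y ∈ closedBall z ε) :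
    tentMap z ε R y = y - z := by
  have hR : 0 < R - ε := sub_pos.2 hεR
  rw [tentMap, max_eq_right (mem_closedBall_iff_norm.1 hy), max_eq_right, div_sub_one hε.ne',
    div_mul_div_cancel₀ hR.ne', div_self hε.ne', one_smul]
  rw [div_sub_one hε.ne']
  positivity

theorem tentMap_of_notMem_ball (hε : 0 < ε) (hy : y ∉ ball z R) : tentMap z ε R y = 0 := by
  rw [mem_ball_iff_norm, not_lt] at hy
  rw [tentMap, max_eq_left, mul_zero, zero_smul]
  exact sub_nonpos.2 ((div_le_one (lt_max_of_lt_right hε)).2 (hy.trans (le_max_left _ _)))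

theorem norm_tentMap (hε : 0 < ε) (hy : y ∈ ball z R \ ball z ε) :
    ‖tentMap z ε R y‖ = ε / (R - ε) * (R - ‖y - z‖) := by
  rw [Set.mem_sdiff, mem_ball_iff_norm, mem_ball_iff_norm, not_lt] at hy
  obtain ⟨hyR, hyε⟩ := hy
  have hyz : 0 < ‖y - z‖ := hε.trans_le hyε
  have hR : 0 < R - ε := sub_pos.2 (hyε.trans_lt hyR)
  have hle : 0 ≤ R / ‖y - z‖ - 1 := sub_nonneg.2 ((one_le_div hyz).2 hyR.le)
  rw [tentMap, max_eq_left hyε, max_eq_right hle, norm_smul, Real.norm_of_nonneg (by positivity),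
    mul_assoc, sub_one_mul, div_mul_cancel₀ _ hyz.ne']

theorem tentMap_ne_zero (hε : 0 < ε) (hy : y ∈ ball z R \ ball z ε) : tentMap z ε R y ≠ 0 := by
  have hyR := mem_ball_iff_norm.1 hy.1
  have hyε := not_lt.1 (mem_ball_iff_norm.not.1 hy.2)
  have hR : 0 < R - ε := by linarith
  have : 0 < R - ‖y - z‖ := by linarith
  rw [← norm_pos_iff, norm_tentMap hε hy]
  positivity

theorem norm_tentMap_lt (hε : 0 < ε) (hy : y ∈ ball z R \ closedBall z ε) :
    ‖tentMap z ε R y‖ < ε := by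
  have hyR := mem_ball_iff_norm.1 hy.1
  have hyε := not_le.1 (mem_closedBall_iff_norm.not.1 hy.2)
  rw [norm_tentMap hε ⟨hy.1, fun h ↦ hy.2 (ball_subset_closedBall h)⟩, div_mul_eq_mul_div,
    div_lt_iff₀ (by linarith)]
  gcongr

theorem injOn_tentMap (hε : 0 < ε) : InjOn (tentMap z ε R) (ball z R \ ball z ε) := by
  intro y hy y' hy' heq
  have hyR := mem_ball_iff_norm.1 hy.1
  have hyε := not_lt.1 (mem_ball_iff_norm.not.1 hy.2)
  have hnorm : ‖y - z‖ = ‖y' - z‖ := by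
    have h := congrArg norm heq
    rw [norm_tentMap hε hy, norm_tentMap hε hy'] at h
    exact sub_right_injective (mul_left_cancel₀ (div_pos hε (by linarith)).ne' h)
  have hne : ε / (R - ε) * max 0 (R / max ‖y' - z‖ ε - 1) ≠ 0 := fun h0 ↦
    tentMap_ne_zero hε hy' (by rw [tentMap, h0, zero_smul])
  rw [tentMap, tentMap, hnorm] at heq
  exact sub_left_injective (smul_right_injective E hne heq)

end TentMap

section NewmanLocal

open Function

theorem PeriodicOn.exists_finset_isFreeBall {E : Type*} [MetricSpace E] {h : E → E} {p : ℕ}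
    {U W C : Set E} (S : PeriodicOn h p W) (hp : p.Prime) (hU : IsOpen U) (hUW : U ⊆ W)
    (hC : IsCompact C) (hCW : C ⊆ W)
    (hCU : ∀ y ∈ C, ∃ i, h^[i] y ∈ U ∧ ¬ IsFixedPt h (h^[i] y)) :
    ∃ L : Finset (E × ℝ), (∀ b ∈ L, IsFreeBall h p U b) ∧
      ∀ y ∈ C, ∃ b ∈ L, ∃ i, h^[i] y ∈ ball b.1 b.2 := by
  obtain ⟨L, hL, hLfin, hLC⟩ := hC.elim_finite_subcover_image (b := {b | IsFreeBall h p U b})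
    (c := fun b ↦ {y ∈ W | ∃ i, h^[i] y ∈ ball b.1 b.2})
    (fun b _ ↦ S.isOpen_exists_iterate_mem isOpen_ball) fun y hy ↦ by
      obtain ⟨i, hiU, hi⟩ := hCU y hy
      obtain ⟨ρ, hρ⟩ := S.exists_isFreeBall hp hU hUW hiU hi
      exact mem_iUnion₂.2 ⟨(h^[i] y, ρ), hρ, hCW hy, i, mem_ball_self hρ.pos⟩
  refine ⟨hLfin.toFinset, fun b hb ↦ hL (hLfin.mem_toFinset.1 hb), fun y hy ↦ ?_⟩
  obtain ⟨b, hb, -, hyb⟩ := mem_iUnion₂.1 (hLC hy)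
  exact ⟨b, hLfin.mem_toFinset.2 hb, hyb⟩

variable {ι : Type*} [Fintype ι] {h : (ι → ℝ) → ι → ℝ} {p : ℕ} {W : Set (ι → ℝ)} {z : ι → ℝ}
  {ε R : ℝ}

theorem PeriodicOn.dvd_one_of_isFreeBall (S : PeriodicOn h p W) (hε : 0 < ε)
    (hεW : closedBall z ε ⊆ W) (hid : ∀ y ∈ closedBall z ε, h y = y) (hRW : ball z R ⊆ W)
    {g : (ι → ℝ) → ι → ℝ} (hg : ContinuousOn g W) (hinv : EqOn (g ∘ h) g W)
    (hgz : ∀ y ∈ closedBall z ε, g y = y - z) {K : Set (ι → ℝ)} (hK : IsCompact K) (hKW : K ⊆ W)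
    (hgK : ∀ y ∈ W \ K, g y = 0) {v : ι → ℝ} (hv : v ≠ 0) (hvε : ‖v‖ < ε)
    (L : Finset ((ι → ℝ) × ℝ)) (hL : ∀ b ∈ L, IsFreeBall h p (ball z R) b)
    (hs : ∀ b ∈ L, ∀ y ∈ sphere b.1 b.2, g y ≠ v)
    (hcover : ∀ y ∈ W \ closedBall z ε, g y = v → ∃ b ∈ L, ∃ i, h^[i] y ∈ ball b.1 b.2) :
    (p : ℤ) ∣ 1 := by
  set F : (ι → ℝ) → ι → ℝ := fun y ↦ g y - v with hF
  set Y := W \ closedBall z ε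
  have hFW : ContinuousOn F W := hg.sub continuousOn_const
  have hadm : BrouwerAdmissible F W := by
    refine ⟨S.isOpen, hFW, ?_⟩
    convert hK.of_isClosed_subset ((hFW.mono hKW).preimage_isClosed_of_isClosed hK.isClosed
      (isClosed_singleton (x := 0))) inter_subset_left using 1
    refine (inter_subset_inter_left _ hKW).antisymm' fun y hy ↦ ⟨?_, hy.2⟩
    by_contra hyK
    exact hv (by simpa only [hF, mem_preimage, mem_singleton_iff, hgK y ⟨hy.1, hyK⟩, zero_sub,
      neg_eq_zero] using hy.2)
  have hY : IsOpen Y := S.isOpen.sdiff isClosed_closedBall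
  have hball : ball z ε ⊆ W := ball_subset_closedBall.trans hεW
  have hdisj : Disjoint Y (ball z ε) :=
    disjoint_sdiff_self_left.mono_right ball_subset_closedBall
  have hzeros : W ∩ F ⁻¹' {0} ⊆ Y ∪ ball z ε := by
    rintro y ⟨hy, h0⟩
    by_cases hyε : y ∈ closedBall z ε
    · refine Or.inr (mem_ball_iff_norm.2 ?_)
      rw [← hgz y hyε, sub_eq_zero.1 h0]
      exact hvε
    · exact Or.inl ⟨hy, hyε⟩
  have hYmaps : MapsTo h Y Y := fun y hy ↦ ⟨S.mapsTo hy.1, fun hy' ↦ hy.2 <| by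
    have hfix : h y = y := S.isFixedPt_of_isFixedPt_iterate (i := 1) hy.1 (hid _ hy')
    rwa [hfix] at hy'⟩
  have hdeg_ball : brouwerDegree F (ball z ε) = 1 :=
    (brouwerDegree_congr fun y hy ↦ by
      simp only [hF, hgz y (ball_subset_closedBall hy), sub_sub]).trans
      (brouwerDegree_sub_const_eq_one isOpen_ball (c := z + v) (by simpa using hvε))
  have hdvd : (p : ℤ) ∣ brouwerDegree F Y :=
    S.dvd_brouwerDegree (f := F) hε hball (fun y hy ↦ hid y (ball_subset_closedBall hy)) hRW
      (fun y hy ↦ congrArg (· - v) (hinv hy)) L hL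
      (fun b hb y hy h0 ↦ hs b hb y hy (sub_eq_zero.1 h0))
      sdiff_subset hYmaps (hadm.of_disjoint hY isOpen_ball sdiff_subset hdisj hzeros)
      fun y hy h0 ↦ hcover y hy (sub_eq_zero.1 h0)
  have hsum := hadm.brouwerDegree_eq_add hY isOpen_ball sdiff_subset hball hdisj hzeros
  rw [brouwerDegree_sub_const_eq_zero S.isOpen hg hK hKW hgK hv, hdeg_ball] at hsum
  exact (dvd_add_right hdvd).1 (hsum ▸ dvd_zero _)

theorem PeriodicOn.exists_ne_on_spheres (S : PeriodicOn h p W) {f : (ι → ℝ) → ι → ℝ}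
    (hf : ContinuousOn f W) (hinv : EqOn (f ∘ h) f W) (v : ι → ℝ) (L : Finset ((ι → ℝ) × ℝ))
    (hL : ∀ b ∈ L, IsFreeBall h p W b) {D : Set (ι → ℝ)} (hD : IsCompact D) (hDW : D ⊆ W)
    (hDv : ∀ y ∈ D, f y = v → ∃ b ∈ L, ∃ i, h^[i] y ∈ ball b.1 b.2) :
    ∃ g : (ι → ℝ) → ι → ℝ, ContinuousOn g W ∧ EqOn (g ∘ h) g W ∧
      (∀ b ∈ L, ∀ y ∈ sphere b.1 b.2, g y ≠ v) ∧
      (∀ y, (∀ b ∈ L, ∀ i, h^[i] y ∉ closedBall b.1 (2 * b.2)) → g y = f y) ∧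
      ∀ y ∈ D, g y = v → ∃ b ∈ L, ∃ i, h^[i] y ∈ ball b.1 b.2 := by
  set 𝒰 := ⋃ b ∈ L, {y ∈ W | ∃ i, h^[i] y ∈ ball b.1 b.2} with h𝒰
  have mem_𝒰 : ∀ y ∈ W, y ∈ 𝒰 ↔ ∃ b ∈ L, ∃ i, h^[i] y ∈ ball b.1 b.2 := fun y hy ↦ by
    simp only [h𝒰, mem_iUnion, mem_ofPred_eq, hy, true_and, exists_prop]
  have h𝒰o : IsOpen 𝒰 := isOpen_biUnion fun b _ ↦ S.isOpen_exists_iterate_mem isOpen_ball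
  have hfv : ContinuousOn (fun y ↦ f y - v) W := hf.sub continuousOn_const
  obtain ⟨r, hr, hrf⟩ := (hD.diff h𝒰o).exists_forall_le'
    (hfv.mono (sdiff_subset.trans hDW)).norm fun y hy ↦
      norm_pos_iff.2 fun h0 ↦ hy.2 ((mem_𝒰 y (hDW hy.1)).2 (hDv y hy.1 (sub_eq_zero.1 h0)))
  obtain ⟨g, hg, hginv, hgr, hgs, hgf⟩ :=
    S.exists_perturbation L hL hfv (fun y hy ↦ congrArg (· - v) (hinv hy)) hr
  refine ⟨fun y ↦ g y + v, hg.add continuousOn_const, fun y hy ↦ congrArg (· + v) (hginv hy),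
    fun b hb y hy h0 ↦ hgs b hb y hy (add_eq_right.1 h0),
    fun y hy ↦ add_eq_of_eq_sub (hgf y hy), fun y hy h0 ↦ (mem_𝒰 y (hDW hy)).1 ?_⟩
  by_contra hy𝒰
  have hlt := hgr y
  rw [add_eq_right.1 h0, zero_sub, norm_neg] at hlt
  exact (hrf y ⟨hy, hy𝒰⟩).not_gt hlt

theorem birkhoffAverage_tentMap_eq_zero {E : Type*} [NormedAddCommGroup E] [NormedSpace ℝ E]
    {h : E → E} {z y : E} (hε : 0 < ε) (hy : ∀ i, h^[i] y ∉ ball z R) (p : ℕ) :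
    birkhoffAverage ℝ h (tentMap z ε R) p y = 0 :=
  smul_eq_zero_of_right _ (Finset.sum_eq_zero fun i _ ↦ tentMap_of_notMem_ball hε (hy i))

theorem PeriodicOn.exists_iterate_mem_ball_not_isFixedPt {E : Type*} [NormedAddCommGroup E]
    [NormedSpace ℝ E] {h : E → E} {W : Set E} {z : E}
    (S : PeriodicOn h p W) (hε : 0 < ε) {w : E}
    (hw : w ∈ ball z R \ ball z ε) (hfix : ¬ IsFixedPt h w) {y : E} (hy : y ∈ W \ ball z ε)
    (hyw : birkhoffAverage ℝ h (tentMap z ε R) p y = tentMap z ε R w) :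
    ∃ i, h^[i] y ∈ ball z R ∧ ¬ IsFixedPt h (h^[i] y) := by
  obtain ⟨i, hi⟩ : ∃ i, h^[i] y ∈ ball z R := by
    by_contra! hout
    exact tentMap_ne_zero hε hw (hyw.symm.trans (birkhoffAverage_tentMap_eq_zero hε hout p))
  refine ⟨i, hi, fun hfixi ↦ hfix ?_⟩
  have hyfix := S.isFixedPt_of_isFixedPt_iterate hy.1 hfixi
  rw [hyfix.birkhoffAverage_eq _ _ (Nat.cast_ne_zero.2 S.pos.ne')] at hyw
  rw [iterate_fixed hyfix] at hi
  rwa [← injOn_tentMap hε ⟨hi, hy.2⟩ hw hyw]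

theorem PeriodicOn.exists_isFreeBall_cover (S : PeriodicOn h p W) (hp : p.Prime) (hε : 0 < ε)
    (hRW : ball z R ⊆ W) {D : Set (ι → ℝ)} (hD : IsCompact D) (hDW : D ⊆ W \ ball z ε)
    {w : ι → ℝ} (hw : w ∈ ball z R \ ball z ε) (hfix : ¬ IsFixedPt h w) :
    ∃ L : Finset ((ι → ℝ) × ℝ), (∀ b ∈ L, IsFreeBall h p (ball z R) b) ∧
      ∀ y ∈ D, birkhoffAverage ℝ h (tentMap z ε R) p y = tentMap z ε R w →
        ∃ b ∈ L, ∃ i, h^[i] y ∈ ball b.1 b.2 := by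
  have hDW' : D ⊆ W := hDW.trans sdiff_subset
  have hf := (S.continuousOn_birkhoffAverage
    (continuous_tentMap (z := z) (R := R) hε).continuousOn p).mono hDW'
  obtain ⟨L, hL, hLD⟩ := S.exists_finset_isFreeBall hp isOpen_ball hRW
    (hD.of_isClosed_subset (hf.preimage_isClosed_of_isClosed hD.isClosed
      (isClosed_singleton (x := tentMap z ε R w))) inter_subset_left) (inter_subset_left.trans hDW')
    fun y hy ↦ S.exists_iterate_mem_ball_not_isFixedPt hε hw hfix (hDW hy.1) hy.2
  exact ⟨L, hL, fun y hy hyw ↦ hLD y ⟨hy, hyw⟩⟩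

theorem PeriodicOn.eq_of_mem_ball (S : PeriodicOn h p W) (hp : p.Prime) (hε : 0 < ε)
    (hεR : ε < R) (hRW : closedBall z R ⊆ W) (hid : ∀ y ∈ closedBall z ε, h y = y) :
    ∀ w ∈ ball z R, h w = w := by
  intro w hw
  by_contra hfix
  have hwε : w ∉ closedBall z ε := fun hw ↦ hfix (hid w hw)
  have hwball : w ∈ ball z R \ ball z ε := ⟨hw, fun hw ↦ hwε (ball_subset_closedBall hw)⟩
  have hballW : ball z R ⊆ W := ball_subset_closedBall.trans hRW
  set v := tentMap z ε R w
  have hv : v ≠ 0 := tentMap_ne_zero hε hwball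
  set f := birkhoffAverage ℝ h (tentMap z ε R) p
  have hfz : ∀ y ∈ closedBall z ε, f y = y - z := fun y hy ↦
    (IsFixedPt.birkhoffAverage_eq ℝ (hid y hy) _ (Nat.cast_ne_zero.2 S.pos.ne')).trans
      (tentMap_of_mem_closedBall hε hεR hy)
  set K := {y ∈ W | ∃ i, h^[i] y ∈ closedBall z R}
  have hK : IsCompact K := S.isCompact_exists_iterate_mem (isCompact_closedBall z R) hRW
  have hKW : K ⊆ W := sep_subset _ _
  have hnotMem : ∀ y ∈ W \ K, ∀ i, h^[i] y ∉ ball z R := fun y hy i hi ↦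
    hy.2 ⟨hy.1, i, ball_subset_closedBall hi⟩
  have hD : IsCompact (K \ ball z ε) := hK.diff isOpen_ball
  obtain ⟨L, hL, hLD⟩ := S.exists_isFreeBall_cover hp hε hballW hD
    (sdiff_subset_sdiff_left hKW) hwball hfix
  obtain ⟨g, hg, hginv, hgs, hgf, hgD⟩ := S.exists_ne_on_spheres
    (S.continuousOn_birkhoffAverage (continuous_tentMap hε).continuousOn p)
    (S.birkhoffAverage_comp_eqOn (tentMap z ε R)) v L
    (fun b hb ↦ ⟨(hL b hb).pos, (hL b hb).subset.trans hballW, (hL b hb).iterate_notMem⟩)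
    hD (sdiff_subset.trans hKW) hLD
  have hgK : ∀ y ∈ W \ K, g y = 0 := fun y hy ↦
    (hgf y fun b hb i hi ↦ hnotMem y hy i ((hL b hb).subset hi)).trans
      (birkhoffAverage_tentMap_eq_zero hε (hnotMem y hy) p)
  have hgz : ∀ y ∈ closedBall z ε, g y = y - z := fun y hy ↦ by
    refine (hgf y fun b hb i hi ↦ ?_).trans (hfz y hy)
    rw [iterate_fixed (hid y hy)] at hi
    exact (hL b hb).iterate_notMem y hi 1 one_pos hp.one_lt (by rwa [iterate_fixed (hid y hy)])
  refine hp.not_dvd_one (Int.natCast_dvd_natCast.1 <| S.dvd_one_of_isFreeBall hε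
    ((closedBall_subset_closedBall hεR.le).trans hRW) hid hballW hg hginv hgz hK hKW hgK hv
    (norm_tentMap_lt hε ⟨hw, hwε⟩) L hL hgs fun y hy hyv ↦ hgD y ⟨?_, ?_⟩ hyv)
  · by_contra hyK
    exact hv (hyv.symm.trans (hgK y ⟨hy.1, hyK⟩))
  · exact fun hyε ↦ hy.2 (ball_subset_closedBall hyε)

end NewmanLocal

section Newman

open Function

namespace PeriodicOn

theorem mem_interior_fixedPoints {ι : Type*} [Finite ι] {h : (ι → ℝ) → ι → ℝ} {p : ℕ}
    {W : Set (ι → ℝ)} (S : PeriodicOn h p W) (hp : p.Prime) {x : ι → ℝ} (hx : x ∈ W)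
    (hxc : x ∈ closure (interior (fixedPoints h))) : x ∈ interior (fixedPoints h) := by
  cases nonempty_fintype ι
  obtain ⟨r, hr, hrW⟩ := nhds_basis_closedBall.mem_iff.1 (S.isOpen.mem_nhds hx)
  obtain ⟨z, hz, hzx⟩ := mem_closure_iff.1 hxc (r / 2) (half_pos hr)
  obtain ⟨ε, ⟨hε, hεr⟩, hfix⟩ : ∃ ε, ε ∈ Ioo 0 (r / 2) ∧ closedBall z ε ⊆ fixedPoints h := by
    obtain ⟨δ, hδ, hsub⟩ := nhds_basis_closedBall.mem_iff.1 (mem_interior_iff_mem_nhds.1 hz)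
    obtain ⟨ε, hε, hlt⟩ := exists_between (lt_min hδ (half_pos hr))
    exact ⟨ε, ⟨hε, hlt.trans_le (min_le_right _ _)⟩,
      (closedBall_subset_closedBall (hlt.le.trans (min_le_left _ _))).trans hsub⟩
  have hzr : closedBall z (r / 2) ⊆ closedBall x r :=
    closedBall_subset_closedBall' (by rw [dist_comm z x]; linarith)
  exact mem_interior.2 ⟨ball z (r / 2),
    S.eq_of_mem_ball hp hε hεr (hzr.trans hrW) hfix, isOpen_ball, hzx⟩

section Conjugation

variable {X Y : Type*} [TopologicalSpace X] [TopologicalSpace Y] {h : X → X} {p : ℕ} {W : Set X}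

theorem conj_iterate (S : PeriodicOn h p W) (φ : OpenPartialHomeomorph X Y)
    (hW : W ⊆ φ.source) (i : ℕ) {y : X} (hy : y ∈ W) :
    (φ ∘ h ∘ φ.symm)^[i] (φ y) = φ (h^[i] y) := by
  induction i generalizing y with
  | zero => rfl
  | succ i ih =>
    rw [iterate_succ_apply, iterate_succ_apply, ← ih (S.mapsTo hy), comp_apply, comp_apply,
      φ.left_inv (hW hy)]

theorem conj (S : PeriodicOn h p W) (φ : OpenPartialHomeomorph X Y) (hW : W ⊆ φ.source) :
    PeriodicOn (φ ∘ h ∘ φ.symm) p (φ '' W) where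
  isOpen := φ.isOpen_image_of_subset_source S.isOpen hW
  continuousOn := by
    have hsymm : MapsTo φ.symm (φ '' W) W := by
      rintro _ ⟨y, hy, rfl⟩
      rwa [φ.left_inv (hW hy)]
    refine (φ.continuousOn.mono hW).comp (S.continuousOn.comp (φ.continuousOn_symm.mono ?_) hsymm)
      (S.mapsTo.comp hsymm)
    exact (image_mono hW).trans φ.image_source_eq_target.subset
  mapsTo := by
    rintro _ ⟨y, hy, rfl⟩
    exact ⟨h y, S.mapsTo hy, (S.conj_iterate φ hW 1 hy).symm⟩
  pos := S.pos
  isPeriodicPt := by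
    rintro _ ⟨y, hy, rfl⟩
    rw [IsPeriodicPt, IsFixedPt, S.conj_iterate φ hW p hy, S.isPeriodicPt y hy]

theorem isFixedPt_conj_iff (S : PeriodicOn h p W) (φ : OpenPartialHomeomorph X Y)
    (hW : W ⊆ φ.source) {y : X} (hy : y ∈ W) :
    IsFixedPt (φ ∘ h ∘ φ.symm) (φ y) ↔ IsFixedPt h y := by
  rw [IsFixedPt, IsFixedPt, ← φ.injOn.eq_iff (hW (S.mapsTo hy)) (hW hy)]
  exact (S.conj_iterate φ hW 1 hy).congr_left

theorem mem_interior_fixedPoints_of_openPartialHomeomorph {ι : Type*} [Finite ι]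
    (S : PeriodicOn h p W) (hp : p.Prime) (φ : OpenPartialHomeomorph X (ι → ℝ))
    (hW : W ⊆ φ.source) {x : X} (hx : x ∈ W) (hxc : x ∈ closure (interior (fixedPoints h))) :
    x ∈ interior (fixedPoints h) := by
  set k := φ ∘ h ∘ φ.symm
  set F := W ∩ interior (fixedPoints h)
  have hF : φ '' F ⊆ interior (fixedPoints k) := by
    refine interior_maximal ?_ (φ.isOpen_image_of_subset_source (S.isOpen.inter isOpen_interior)
      (inter_subset_left.trans hW))
    rintro _ ⟨y, hy, rfl⟩
    exact (S.isFixedPt_conj_iff φ hW hy.1).2 (interior_subset (s := fixedPoints h) hy.2)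
  have hφx : φ x ∈ closure (interior (fixedPoints k)) :=
    closure_mono hF (mem_closure_image (φ.continuousAt (hW hx))
      (S.isOpen.inter_closure ⟨hx, hxc⟩))
  have hφint := (S.conj φ hW).mem_interior_fixedPoints hp (mem_image_of_mem φ hx) hφx
  exact mem_interior.2 ⟨W ∩ φ ⁻¹' interior (fixedPoints k),
    fun y hy ↦ (S.isFixedPt_conj_iff φ hW hy.1).1 (interior_subset (s := fixedPoints k) hy.2),
    (φ.continuousOn.mono hW).isOpen_inter_preimage S.isOpen isOpen_interior, hx, hφint⟩

end Conjugation

theorem eqOn_id_of_prime (E : Type*) [NormedAddCommGroup E] [NormedSpace ℝ E]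
    [FiniteDimensional ℝ E] {M : Type*} [TopologicalSpace M] [T2Space M] [ChartedSpace E M]
    {h : M → M} {p : ℕ} {W : Set M} (S : PeriodicOn h p W) (hp : p.Prime) (hW : IsPreconnected W)
    (hne : (W ∩ interior (fixedPoints h)).Nonempty) : EqOn h id W := by
  set F := W ∩ interior (fixedPoints h)
  have hFW : F ⊆ W := inter_subset_left
  suffices hclosed : closure F ∩ W ⊆ F from fun y hy ↦
    interior_subset (s := fixedPoints h) (hW.subset_of_closure_inter_subset
      (S.isOpen.inter isOpen_interior) (hne.mono (subset_inter hFW subset_rfl)) hclosed hy).2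
  rintro x ⟨hxF, hxW⟩
  have hx : h x = x :=
    EqOn.of_subset_closure (fun y hy ↦ interior_subset (s := fixedPoints h) hy.2)
      (S.continuousOn.mono inter_subset_right) continuousOn_id
      (subset_inter subset_closure hFW) inter_subset_left ⟨hxF, hxW⟩
  set φ := (chartAt E x).transHomeomorph (Module.finBasis ℝ E).equivFunL.toHomeomorph
  have hxφ : x ∈ {y ∈ W | ∀ i, h^[i] y ∈ φ.source} :=
    ⟨hxW, fun i ↦ by rw [iterate_fixed hx]; exact mem_chart_source E x⟩
  exact ⟨hxW, (S.forall_iterate_mem φ.open_source)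
    |>.mem_interior_fixedPoints_of_openPartialHomeomorph hp φ (fun y hy ↦ hy.2 0) hxφ
      (closure_mono inter_subset_right hxF)⟩

theorem eqOn_id (E : Type*) [NormedAddCommGroup E] [NormedSpace ℝ E] [FiniteDimensional ℝ E]
    {M : Type*} [TopologicalSpace M] [T2Space M] [ChartedSpace E M] {h : M → M} {p : ℕ}
    {W : Set M} (S : PeriodicOn h p W) (hW : IsPreconnected W)
    (hne : (W ∩ interior (fixedPoints h)).Nonempty) : EqOn h id W := by
  induction p using induction_on_primes with
  | zero => exact absurd S.pos (lt_irrefl 0)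
  | one => exact S.isPeriodicPt
  | prime_mul q m hq ih =>
    have hm : EqOn h^[m] id W := eqOn_id_of_prime E (S.iterate_of_mul_eq (mul_comm m q)) hq hW <|
      hne.mono <| inter_subset_inter_right W <| interior_mono fun y hy ↦ iterate_fixed hy m
    exact ih ⟨S.isOpen, S.continuousOn, S.mapsTo, Nat.pos_of_mul_pos_left S.pos, hm⟩

end PeriodicOn

end Newman

section FrontierRigidity

open Function

theorem eqOn_iterate_of_mapsTo {X : Type*} {f g : X → X} {A : Set X} (hfg : EqOn f g A)
    (hg : MapsTo g A A) (i : ℕ) : EqOn f^[i] g^[i] A := by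
  induction i with
  | zero => exact eqOn_refl _ _
  | succ i ih =>
    intro y hy
    rw [iterate_succ_apply, iterate_succ_apply, hfg hy, ih (hg hy)]

namespace PeriodicOn

open scoped Classical in
theorem piecewise_id {X : Type*} [TopologicalSpace X] {h : X → X} {p : ℕ} {A W : Set X}
    (S : PeriodicOn h p A) (hW : IsOpen W) (hAW : A ⊆ W) (hc : ContinuousOn h W)
    (hfr : ∀ y ∈ W ∩ frontier A, h y = y) : PeriodicOn (A.piecewise h id) p W where
  isOpen := hW
  continuousOn := ContinuousOn.piecewise hfr (hc.mono inter_subset_left) continuousOn_id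
  mapsTo y hy := by
    by_cases hyA : y ∈ A
    · rw [piecewise_eq_of_mem _ _ _ hyA]
      exact hAW (S.mapsTo hyA)
    · rwa [piecewise_eq_of_notMem _ _ _ hyA]
  pos := S.pos
  isPeriodicPt y _ := by
    by_cases hyA : y ∈ A
    · exact (eqOn_iterate_of_mapsTo (piecewise_eqOn A h id) S.mapsTo p hyA).trans
        (S.isPeriodicPt y hyA)
    · exact iterate_fixed (f := A.piecewise h id) (piecewise_eq_of_notMem _ _ _ hyA) p

theorem eqOn_id_of_frontier (E : Type*) [NormedAddCommGroup E] [NormedSpace ℝ E]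
    [FiniteDimensional ℝ E] {M : Type*} [TopologicalSpace M] [T2Space M] [ChartedSpace E M]
    {h : M → M} {p : ℕ} {A W : Set M} (S : PeriodicOn h p A) (hW : IsOpen W)
    (hWc : IsPreconnected W) (hAW : A ⊆ W) (hc : ContinuousOn h W)
    (hfr : ∀ y ∈ W ∩ frontier A, h y = y) (hne : (W \ closure A).Nonempty) : EqOn h id A := by
  classical
  obtain ⟨d, hdW, hdA⟩ := hne
  have hext := (S.piecewise_id hW hAW hc hfr).eqOn_id E hWc ⟨d, hdW, mem_interior.2 ⟨(closure A)ᶜ,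
    fun y hy ↦ piecewise_eq_of_notMem _ _ _ fun hyA ↦ hy (subset_closure hyA),
    isClosed_closure.isOpen_compl, hdA⟩⟩
  exact (piecewise_eqOn A h id).symm.trans (hext.mono hAW)

end PeriodicOn

end FrontierRigidity

open MulAction

theorem exists_isOpen_inter_subset_of_subset_iUnion {X ι : Type*} [TopologicalSpace X] [T2Space X]
    [LocallyCompactSpace X] [Countable ι] {S : Set X} (hS : IsLocallyClosed S) (hne : S.Nonempty)
    {F : ι → Set X} (hF : ∀ i, IsClosed (F i)) (hSF : S ⊆ ⋃ i, F i) :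
    ∃ i, ∃ N, IsOpen N ∧ (S ∩ N).Nonempty ∧ S ∩ N ⊆ F i := by
  have := hS.locallyCompactSpace
  have := hne.to_subtype
  obtain ⟨i, y, hy⟩ := nonempty_interior_of_iUnion_of_closed
    (fun i ↦ (hF i).preimage (continuous_subtype_val (p := (· ∈ S))))
    (by rw [← preimage_iUnion, preimage_eq_univ_iff, Subtype.range_coe]; exact hSF)
  obtain ⟨_, hsub, ⟨N, hN, rfl⟩, hyN⟩ := mem_interior.1 hy
  exact ⟨i, N, hN, ⟨y, y.2, hyN⟩, fun z hz ↦ hsub (a := ⟨z, hz.1⟩) hz.2⟩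

section FixedBy

variable {G M : Type*} [Group G] [MulAction G M]

theorem fixedBy_subset_fixedBy_pow (g : G) (j : ℕ) : fixedBy M g ⊆ fixedBy M (g ^ j) := by
  simpa only [zpow_natCast] using fixedBy_subset_fixedBy_zpow M g j

variable [TopologicalSpace M]

variable (M) in
/-- The points with a neighbourhood on which `g` acts with finite order. -/
def locallyPeriodicPts (g : G) : Set M := ⋃ m > 0, interior (fixedBy M (g ^ m))

theorem mem_locallyPeriodicPts {g : G} {y : M} :
    y ∈ locallyPeriodicPts M g ↔ ∃ m > 0, y ∈ interior (fixedBy M (g ^ m)) := by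
  simp only [locallyPeriodicPts, mem_iUnion, exists_prop]

theorem isOpen_locallyPeriodicPts (g : G) : IsOpen (locallyPeriodicPts M g) :=
  isOpen_biUnion fun _ _ ↦ isOpen_interior

theorem locallyPeriodicPts_pow (g : G) {j : ℕ} (hj : 0 < j) :
    locallyPeriodicPts M (g ^ j) = locallyPeriodicPts M g := by
  ext y
  rw [mem_locallyPeriodicPts, mem_locallyPeriodicPts]
  constructor
  · rintro ⟨m, hm, hy⟩
    exact ⟨j * m, Nat.mul_pos hj hm, by rwa [pow_mul]⟩
  · rintro ⟨m, hm, hy⟩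
    refine ⟨m, hm, interior_mono ?_ hy⟩
    rw [pow_right_comm]
    exact fixedBy_subset_fixedBy_pow _ j

variable [ContinuousConstSMul G M]

theorem isClosed_fixedBy [T2Space M] (g : G) : IsClosed (fixedBy M g) :=
  isClosed_eq (continuous_const_smul g) continuous_id

theorem mapsTo_smul_connectedComponentIn {g : G} {x : M} (hx : g • x = x) {U : Set M}
    (hU : IsOpen U) :
    MapsTo (g • ·) (connectedComponentIn (U \ ⋃ a : G, (a • ·) '' frontier U) x)
      (connectedComponentIn (U \ ⋃ a : G, (a • ·) '' frontier U) x) := by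
  set T := ⋃ a : G, (a • ·) '' frontier U
  set C := connectedComponentIn (U \ T) x
  rcases C.eq_empty_or_nonempty with hC | hC
  · rw [hC]; exact mapsTo_empty _ _
  have hCU : C ⊆ U \ T := connectedComponentIn_subset _ _
  have hxC : x ∈ C := mem_connectedComponentIn (connectedComponentIn_nonempty_iff.1 hC)
  have hpre : IsPreconnected ((g • ·) '' C) :=
    isPreconnected_connectedComponentIn.image _ (continuous_const_smul g).continuousOn
  have hxg : x ∈ (g • ·) '' C := ⟨x, hxC, hx⟩
  have hT : ∀ y ∈ (g • ·) '' C, y ∉ T := by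
    rintro _ ⟨y, hy, rfl⟩ hyT
    obtain ⟨a, k, hk, hak : a • k = g • y⟩ := mem_iUnion.1 hyT
    refine (hCU hy).2 (mem_iUnion.2 ⟨g⁻¹ * a, k, hk, ?_⟩)
    exact (mul_smul _ _ _).trans (by rw [hak, inv_smul_smul])
  have hsub : (g • ·) '' C ⊆ U := by
    refine hpre.subset_of_closure_inter_subset hU ⟨x, hxg, (hCU hxC).1⟩ ?_
    rintro y ⟨hyU, hyC⟩
    by_contra hy
    refine hT y hyC (mem_iUnion.2 ⟨1, y, ?_, one_smul G y⟩)
    rw [hU.frontier_eq]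
    exact ⟨hyU, hy⟩
  exact mapsTo_iff_image_subset.2
    (hpre.subset_connectedComponentIn hxg fun y hy ↦ ⟨hsub hy, hT y hy⟩)

theorem periodicOn_smul {g : G} {m : ℕ} {W : Set M} (hW : IsOpen W) (hg : MapsTo (g • ·) W W)
    (hm : 0 < m) (hWm : W ⊆ fixedBy M (g ^ m)) : PeriodicOn (g • · : M → M) m W where
  isOpen := hW
  continuousOn := (continuous_const_smul g).continuousOn
  mapsTo := hg
  pos := hm
  isPeriodicPt y hy := (smul_iterate_apply g m y).trans (hWm hy)

end FixedBy

section OrbitSpace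

variable {G M : Type*} [Group G] [TopologicalSpace M] [MulAction G M]
  [T2Space (Quotient (orbitRel G M))]

theorem isClosed_iUnion_smul_of_isCompact {K : Set M} (hK : IsCompact K) :
    IsClosed (⋃ a : G, (a • ·) '' K) := by
  rw [← quotient_preimage_image_eq_union_mul]
  let := orbitRel G M
  exact (hK.image continuous_quotient_mk').isClosed.preimage continuous_quotient_mk'

variable (G) in
theorem isClosed_orbit (x : M) : IsClosed (orbit G x) := by
  have h := isClosed_iUnion_smul_of_isCompact (G := G) (isCompact_singleton (x := x))
  simpa only [image_singleton, iUnion_singleton_eq_range] using! h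

variable [ContinuousConstSMul G M] [T2Space M]
variable [LocallyCompactSpace M] [Countable G]

variable (G) in
theorem exists_isOpen_inter_orbit_subset (x : M) :
    ∃ U, IsOpen U ∧ x ∈ U ∧ U ∩ orbit G x ⊆ {x} := by
  obtain ⟨a, N, hN, ⟨_, ⟨b, rfl⟩, hbN⟩, hsub⟩ := exists_isOpen_inter_subset_of_subset_iUnion
    (isClosed_orbit G x).isLocallyClosed (nonempty_orbit x)
    (fun a : G ↦ isClosed_singleton (x := a • x)) (by rw [iUnion_singleton_eq_range]; rfl)
  have hba : b • x = a • x := hsub ⟨mem_orbit x b, hbN⟩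
  refine ⟨(a • ·) ⁻¹' N, hN.preimage (continuous_const_smul a), ?_, ?_⟩
  · rwa [mem_preimage, ← hba]
  · rintro y ⟨hy, c, rfl⟩
    have hcx : a • c • x = a • x := hsub ⟨mem_orbit_of_mem_orbit a (mem_orbit x c), hy⟩
    exact smul_left_cancel a hcx

theorem finite_orbit_inter (x : M) {K : Set M} (hK : IsCompact K) : (orbit G x ∩ K).Finite := by
  have hloc : ∀ y : M, ∃ U ∈ 𝓝 y, U ∩ orbit G x ⊆ {y} := by
    intro y
    by_cases hy : y ∈ orbit G x
    · obtain ⟨U, hU, hyU, hsub⟩ := exists_isOpen_inter_orbit_subset G y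
      exact ⟨U, hU.mem_nhds hyU, orbit_eq_iff.2 hy ▸ hsub⟩
    · exact ⟨(orbit G x)ᶜ, (isClosed_orbit G x).isOpen_compl.mem_nhds hy,
        (compl_inter_self _).trans_subset (empty_subset _)⟩
  choose U hU hUx using hloc
  obtain ⟨t, -, ht⟩ := hK.elim_nhds_subcover U fun y _ ↦ hU y
  refine t.finite_toSet.subset ?_
  rintro y ⟨hy, hyK⟩
  obtain ⟨z, hz, hyz⟩ := mem_iUnion₂.1 (ht hyK)
  rwa [show y = z from hUx z ⟨hyz, hy⟩]

theorem exists_mem_fixedBy_pow_of_mapsTo {g : G} {W K : Set M} (hK : IsCompact K) (hWK : W ⊆ K)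
    (hg : MapsTo (g • ·) W W) {y : M} (hy : y ∈ W) : ∃ m > 0, y ∈ fixedBy M (g ^ m) := by
  obtain ⟨i, j, hij, heq⟩ := (finite_orbit_inter (G := G) y hK).exists_lt_map_eq_of_forall_mem
    (f := fun i : ℕ ↦ g ^ i • y)
    fun i ↦ mem_inter (mem_orbit y _) (hWK (smul_iterate_apply g i y ▸ hg.iterate i hy))
  refine ⟨j - i, Nat.sub_pos_of_lt hij, smul_left_cancel (g ^ i) ?_⟩
  rw [← mul_smul, ← pow_add, Nat.add_sub_cancel' hij.le]
  exact heq.symm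

variable [LocallyConnectedSpace M]

theorem exists_isPreconnected_mapsTo_smul {g : G} {x : M} (hx : g • x = x) {N : Set M}
    (hN : N ∈ 𝓝 x) : ∃ W ⊆ N, IsOpen W ∧ IsPreconnected W ∧ x ∈ W ∧ MapsTo (g • ·) W W ∧
      ∀ y ∈ W, ∃ m > 0, y ∈ fixedBy M (g ^ m) := by
  obtain ⟨V, hV, hxV, hVx⟩ := exists_isOpen_inter_orbit_subset G x
  obtain ⟨K, hKx, hKN, hK⟩ := local_compact_nhds (inter_mem hN (hV.mem_nhds hxV))
  set U := interior K
  have hUK : closure U ⊆ K := closure_minimal interior_subset hK.isClosed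
  have hxU : x ∈ U := mem_interior_iff_mem_nhds.2 hKx
  set T := ⋃ a : G, (a • ·) '' frontier U
  have hT : IsClosed T :=
    isClosed_iUnion_smul_of_isCompact (hK.of_isClosed_subset isClosed_frontier
      (frontier_subset_closure.trans hUK))
  have hxT : x ∉ T := by
    intro hxT
    obtain ⟨a, k, hk, hak : a • k = x⟩ := mem_iUnion.1 hxT
    have hkx : k = x := hVx ⟨(hKN (hUK (frontier_subset_closure hk))).2,
      mem_orbit_symm.1 (hak ▸ mem_orbit k a)⟩
    rw [isOpen_interior.frontier_eq] at hk
    exact hk.2 (hkx ▸ hxU)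
  have hsub : connectedComponentIn (U \ T) x ⊆ U :=
    (connectedComponentIn_subset _ _).trans sdiff_subset
  have hmaps := mapsTo_smul_connectedComponentIn hx (isOpen_interior (s := K))
  exact ⟨connectedComponentIn (U \ T) x, fun y hy ↦ (hKN (interior_subset (hsub hy))).1,
    (isOpen_interior.sdiff hT).connectedComponentIn, isPreconnected_connectedComponentIn,
    mem_connectedComponentIn ⟨hxU, hxT⟩, hmaps,
    fun y hy ↦ exists_mem_fixedBy_pow_of_mapsTo hK (hsub.trans interior_subset) hmaps hy⟩

end OrbitSpace

section Rigidity

open scoped Pointwise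

variable (E : Type*) [NormedAddCommGroup E] [NormedSpace ℝ E] [FiniteDimensional ℝ E]
  {G M : Type*} [TopologicalSpace M] [T2Space M] [ChartedSpace E M] [LocallyCompactSpace M]
  [LocallyConnectedSpace M] [Group G] [Countable G] [MulAction G M] [ContinuousConstSMul G M]
  [T2Space (Quotient (orbitRel G M))] {g : G} {W : Set M}

include E

theorem mem_interior_fixedBy_of_mem_closure {y : M} (hy : y ∈ locallyPeriodicPts M g)
    (hyc : y ∈ closure (interior (fixedBy M g))) : y ∈ interior (fixedBy M g) := by
  obtain ⟨m, hm, hym⟩ := mem_locallyPeriodicPts.1 hy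
  have hyg : g • y = y := closure_minimal interior_subset (isClosed_fixedBy g) hyc
  obtain ⟨W, hWN, hW, hWc, hyW, hmaps, -⟩ :=
    exists_isPreconnected_mapsTo_smul hyg (isOpen_interior.mem_nhds hym)
  have hfix : EqOn (g • ·) id W :=
    (periodicOn_smul hW hmaps hm (hWN.trans interior_subset)).eqOn_id E hWc
      (_root_.mem_closure_iff.1 hyc W hW hyW)
  exact mem_interior.2 ⟨W, hfix, hW, hyW⟩

theorem smul_eq_of_mem_interior_fixedBy_pow (hW : IsOpen W) (hWc : IsPreconnected W)
    (hg : MapsTo (g • ·) W W) (hfix : W \ locallyPeriodicPts M g ⊆ fixedBy M g) {j : ℕ}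
    (hj : 0 < j) (hne : ((W ∩ locallyPeriodicPts M g) \ fixedBy M (g ^ j)).Nonempty) {y : M}
    (hyW : y ∈ W) (hy : y ∈ interior (fixedBy M (g ^ j))) : g • y = y := by
  set A := W ∩ interior (fixedBy M (g ^ j))
  have hA : IsOpen A := hW.inter isOpen_interior
  have hgA : MapsTo (g • ·) A A := by
    have hinv : g • interior (fixedBy M (g ^ j)) = interior (fixedBy M (g ^ j)) := by
      rw [← interior_smul, fixedBy_mem_fixedBy_of_commute (Commute.pow_self g j)]
    exact fun z hz ↦ ⟨hg hz.1, hinv ▸ smul_mem_smul_set hz.2⟩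
  have hAF : A ⊆ fixedBy M (g ^ j) := inter_subset_right.trans interior_subset
  have hfr : ∀ z ∈ W ∩ frontier A, g • z = z := by
    rintro z ⟨hzW, hz⟩
    rw [hA.frontier_eq] at hz
    refine hfix ⟨hzW, fun hzP ↦ hz.2 ⟨hzW, ?_⟩⟩
    rw [← locallyPeriodicPts_pow g hj] at hzP
    exact mem_interior_fixedBy_of_mem_closure E hzP
      (closure_mono inter_subset_right hz.1)
  have hdisj : (W \ closure A).Nonempty := by
    obtain ⟨d, hd, hdF⟩ := hne
    exact ⟨d, hd.1, fun hdA ↦ hdF (closure_minimal hAF (isClosed_fixedBy _) hdA)⟩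
  exact (periodicOn_smul hA hgA hj hAF).eqOn_id_of_frontier E hW hWc inter_subset_left
    (continuous_const_smul g).continuousOn hfr hdisj ⟨hyW, hy⟩

theorem subset_locallyPeriodicPts_of_isPreconnected (hW : IsOpen W) (hWc : IsPreconnected W)
    (hg : MapsTo (g • ·) W W) (hfix : W \ locallyPeriodicPts M g ⊆ fixedBy M g) :
    W ⊆ locallyPeriodicPts M g := by
  by_cases hj : ∃ j > 0, W ∩ locallyPeriodicPts M g ⊆ fixedBy M (g ^ j)
  · obtain ⟨j, hj, hsub⟩ := hj
    refine fun x hx ↦ mem_locallyPeriodicPts.2 ⟨j, hj, mem_interior.2 ⟨W, fun y hy ↦ ?_, hW, hx⟩⟩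
    by_cases hyP : y ∈ locallyPeriodicPts M g
    · exact hsub ⟨hy, hyP⟩
    · exact fixedBy_subset_fixedBy_pow g j (hfix ⟨hy, hyP⟩)
  · push Not at hj
    have hper : W ∩ locallyPeriodicPts M g ⊆ fixedBy M g := by
      rintro y ⟨hyW, hyP⟩
      obtain ⟨j, hj₀, hyj⟩ := mem_locallyPeriodicPts.1 hyP
      exact smul_eq_of_mem_interior_fixedBy_pow E hW hWc hg hfix hj₀
        (sdiff_nonempty.2 (hj j hj₀)) hyW hyj
    exact absurd (by rwa [pow_one] : _ ⊆ fixedBy M (g ^ 1)) (hj 1 one_pos)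

theorem subset_locallyPeriodicPts (hW : IsOpen W)
    (hper : ∀ y ∈ W, ∃ m > 0, y ∈ fixedBy M (g ^ m)) : W ⊆ locallyPeriodicPts M g := by
  by_contra hnot
  obtain ⟨m, N, hN, ⟨x, ⟨hxW, hxP⟩, hxN⟩, hfix⟩ := exists_isOpen_inter_subset_of_subset_iUnion
    (hW.isLocallyClosed.inter (isOpen_locallyPeriodicPts g).isClosed_compl.isLocallyClosed)
    (sdiff_nonempty.2 hnot) (fun m : ℕ+ ↦ isClosed_fixedBy (M := M) (g ^ (m : ℕ)))
    fun y hy ↦ by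
      obtain ⟨m, hm, hym⟩ := hper y hy.1
      exact mem_iUnion.2 ⟨⟨m, hm⟩, hym⟩
  obtain ⟨W', hW'N, hW', hWc', hxW', hmaps, -⟩ := exists_isPreconnected_mapsTo_smul
    (hfix ⟨⟨hxW, hxP⟩, hxN⟩) ((hW.inter hN).mem_nhds ⟨hxW, hxN⟩)
  rw [← locallyPeriodicPts_pow g m.pos] at hxP hfix
  exact hxP (subset_locallyPeriodicPts_of_isPreconnected E hW' hWc' hmaps
    (fun y hy ↦ hfix ⟨⟨(hW'N hy.1).1, hy.2⟩, (hW'N hy.1).2⟩) hxW')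

theorem isClopen_interior_fixedBy (g : G) : IsClopen (interior (fixedBy M g)) := by
  refine ⟨isClosed_of_closure_subset fun x hx ↦ ?_, isOpen_interior⟩
  have hxg : g • x = x := closure_minimal interior_subset (isClosed_fixedBy g) hx
  obtain ⟨W, -, hW, -, hxW, -, hper⟩ := exists_isPreconnected_mapsTo_smul hxg univ_mem
  exact mem_interior_fixedBy_of_mem_closure E (subset_locallyPeriodicPts E hW hper hxW) hx

end Rigidity

end

/-- Rigidity: for a countable group acting on a connected topological `n`-manifold with
Hausdorff orbit space, any element whose fixed-point set has nonempty interior acts as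
the identity. -/
theorem stmt14 {G M : Type*} (n : ℕ) [Group G] [Countable G]
    [TopologicalSpace M] [ConnectedSpace M] [T2Space M]
    [ChartedSpace (EuclideanSpace ℝ (Fin n)) M]
    [MulAction G M] [ContinuousConstSMul G M]
    [T2Space (Quotient (MulAction.orbitRel G M))]
    (g : G) (hg : (interior {x : M | g • x = x}).Nonempty) :
    ∀ x : M, g • x = x := by
  have := ChartedSpace.locallyCompactSpace (EuclideanSpace ℝ (Fin n)) M
  have := ChartedSpace.locallyConnectedSpace (EuclideanSpace ℝ (Fin n)) M
  have huniv := (isClopen_interior_fixedBy (EuclideanSpace ℝ (Fin n)) g).eq_univ hg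
  exact fun x ↦ interior_subset (s := MulAction.fixedBy M g) (huniv ▸ Set.mem_univ x)
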